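/- arXiv:1803.10337 — 2 statements merged into one kernel-verified Lean document; each statement's English description precedes it below -/
import Mathlib

section
/- Assume a−b is odd and N_m = 0 (i.e. the associated normalized rank-2 bundle is stable with c_1 = −1). Then for a general linear form L ∈ R_1, the multiplication map ×L : M_{d−1} → M_d is injective for all d ≤ m−1 and surjective for all d ≥ m. -/
open MvPolynomial

noncomputable section

variable {K : Type*} [Field K]

/-- `p` is homogeneous of (integer) degree `d`; for `d < 0` this forces `p = 0`. -/
def homog (p : MvPolynomial (Fin 3) K) (d : ℤ) : Prop :=
  IsWeightedHomogeneous (fun _ : Fin 3 => (1 : ℤ)) p d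

/-- The degree-`d` graded piece of `⊕_{i=1}^{N} R(-a i)`, as a `K`-subspace of
`Fin N → R`, `R = K[x,y,z]`. -/
def degPiece (N : ℕ) (a : Fin N → ℤ) (d : ℤ) :
    Submodule K (Fin N → MvPolynomial (Fin 3) K) :=
  Submodule.pi Set.univ fun i =>
    weightedHomogeneousSubmodule K (fun _ : Fin 3 => (1 : ℤ)) (d - a i)

lemma mem_degPiece {N : ℕ} {a : Fin N → ℤ} {d : ℤ} {v : Fin N → MvPolynomial (Fin 3) K} :
    v ∈ degPiece (K := K) N a d ↔ ∀ i, homog (v i) (d - a i) := by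
  simp [degPiece, Submodule.mem_pi, mem_weightedHomogeneousSubmodule, homog]

/-- The map `φ : ⊕ R(-a i) → ⊕ R(-b j)` given by the matrix `Φ`, as a `K`-linear map. -/
def phiK (n : ℕ) (Φ : Matrix (Fin n) (Fin (n + 2)) (MvPolynomial (Fin 3) K)) :
    (Fin (n + 2) → MvPolynomial (Fin 3) K) →ₗ[K] (Fin n → MvPolynomial (Fin 3) K) :=
  (Matrix.mulVecLin Φ).restrictScalars K

/-- The degree-`d` graded piece of `N = ker φ`. -/
def Nd (n : ℕ) (a : Fin (n + 2) → ℤ) (Φ : Matrix (Fin n) (Fin (n + 2)) (MvPolynomial (Fin 3) K))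
    (d : ℤ) : Submodule K (Fin (n + 2) → MvPolynomial (Fin 3) K) :=
  degPiece (n + 2) a d ⊓ LinearMap.ker (phiK n Φ)

/-- The image of the degree-`d` piece of `F` inside the degree-`d` piece of `G`,
viewed as a subspace of the latter. -/
def MdSub (n : ℕ) (a : Fin (n + 2) → ℤ) (b : Fin n → ℤ)
    (Φ : Matrix (Fin n) (Fin (n + 2)) (MvPolynomial (Fin 3) K)) (d : ℤ) :
    Submodule K ↥(degPiece (K := K) n b d) :=
  Submodule.comap (degPiece (K := K) n b d).subtype
    (Submodule.map (phiK n Φ) (degPiece (n + 2) a d))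

/-- The degree-`d` graded piece of `M = coker φ`. -/
abbrev Md (n : ℕ) (a : Fin (n + 2) → ℤ) (b : Fin n → ℤ)
    (Φ : Matrix (Fin n) (Fin (n + 2)) (MvPolynomial (Fin 3) K)) (d : ℤ) :=
  ↥(degPiece (K := K) n b d) ⧸ MdSub n a b Φ d

/-- Multiplication by `L` on tuples of polynomials, as a `K`-linear map. -/
def mulL (N : ℕ) (L : MvPolynomial (Fin 3) K) :
    (Fin N → MvPolynomial (Fin 3) K) →ₗ[K] (Fin N → MvPolynomial (Fin 3) K) :=
  ((LinearMap.lsmul (MvPolynomial (Fin 3) K) (Fin N → MvPolynomial (Fin 3) K)) L).restrictScalars K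

lemma mulL_apply {N : ℕ} (L : MvPolynomial (Fin 3) K) (v : Fin N → MvPolynomial (Fin 3) K) :
    mulL N L v = L • v := rfl

lemma mulL_mem {N : ℕ} {a : Fin N → ℤ} {L : MvPolynomial (Fin 3) K} (hL : homog L 1)
    {d : ℤ} {v : Fin N → MvPolynomial (Fin 3) K} (hv : v ∈ degPiece (K := K) N a (d - 1)) :
    mulL N L v ∈ degPiece (K := K) N a d := by
  rw [mem_degPiece] at hv ⊢
  intro i
  have h := hL.mul (hv i)
  have e : (1 : ℤ) + (d - 1 - a i) = d - a i := by ring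
  rw [e] at h
  simpa [mulL_apply, smul_eq_mul, homog] using h

/-- Multiplication by `L` from the degree-`d-1` piece of `G` to the degree-`d` piece. -/
def mulLres (n : ℕ) (b : Fin n → ℤ) (L : MvPolynomial (Fin 3) K) (hL : homog L 1) (d : ℤ) :
    ↥(degPiece (K := K) n b (d - 1)) →ₗ[K] ↥(degPiece (K := K) n b d) :=
  (mulL n L).restrict fun _ hv => mulL_mem hL hv

lemma mulLres_comap (n : ℕ) (a : Fin (n + 2) → ℤ) (b : Fin n → ℤ)
    (Φ : Matrix (Fin n) (Fin (n + 2)) (MvPolynomial (Fin 3) K))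
    (L : MvPolynomial (Fin 3) K) (hL : homog L 1) (d : ℤ) :
    MdSub n a b Φ (d - 1) ≤ Submodule.comap (mulLres n b L hL d) (MdSub n a b Φ d) := by
  rintro ⟨w, hw⟩ hmem
  obtain ⟨v, hv, hφv⟩ := hmem
  refine ⟨mulL (n + 2) L v, mulL_mem hL hv, ?_⟩
  show phiK n Φ (mulL (n + 2) L v) = ((mulLres n b L hL d) ⟨w, hw⟩ : Fin n → MvPolynomial (Fin 3) K)
  have : phiK n Φ (mulL (n + 2) L v) = L • phiK n Φ v := by
    simp [phiK, mulL_apply]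
  rw [this, hφv]
  rfl

/-- The map induced by multiplication by `L` from `M_{d-1}` to `M_d`,
where `M = coker φ`. -/
def mulLmap (n : ℕ) (a : Fin (n + 2) → ℤ) (b : Fin n → ℤ)
    (Φ : Matrix (Fin n) (Fin (n + 2)) (MvPolynomial (Fin 3) K))
    (L : MvPolynomial (Fin 3) K) (hL : homog L 1) (d : ℤ) :
    Md n a b Φ (d - 1) →ₗ[K] Md n a b Φ d :=
  Submodule.mapQ (MdSub n a b Φ (d - 1)) (MdSub n a b Φ d) (mulLres n b L hL d)
    (mulLres_comap n a b Φ L hL d)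

/-- The linear form with coefficient vector `c`. -/
def linform (c : Fin 3 → K) : MvPolynomial (Fin 3) K := ∑ i, C (c i) * X i

lemma homog_linform (c : Fin 3 → K) : homog (linform c) 1 := by
  rw [homog, ← mem_weightedHomogeneousSubmodule]
  refine sum_mem fun i _ => ?_
  rw [mem_weightedHomogeneousSubmodule]
  simpa using (isWeightedHomogeneous_C (fun _ : Fin 3 => (1 : ℤ)) (c i)).mul
    (isWeightedHomogeneous_X K (fun _ : Fin 3 => (1 : ℤ)) i)

/-- Finite length of `coker φ`: all sufficiently high graded pieces vanish. -/
def FiniteColength (n : ℕ) (a : Fin (n + 2) → ℤ) (b : Fin n → ℤ)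
    (Φ : Matrix (Fin n) (Fin (n + 2)) (MvPolynomial (Fin 3) K)) : Prop :=
  ∃ D : ℤ, ∀ d : ℤ, D ≤ d →
    degPiece (K := K) n b d ≤ Submodule.map (phiK n Φ) (degPiece (n + 2) a d)

end


noncomputable section lineLemmas

/-- Polynomials of (integer) degree at most `e`. -/
def Bd (A : Type*) [CommRing A] (e : ℤ) : Submodule A (Polynomial A) :=
  Polynomial.degreeLT A (e + 1).toNat

lemma mem_Bd {A : Type*} [CommRing A] {e : ℤ} {p : Polynomial A} :
    p ∈ Bd A e ↔ ∀ k : ℕ, e < k → p.coeff k = 0 := by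
  rw [Bd, Polynomial.mem_degreeLT, Polynomial.degree_lt_iff_coeff_zero]
  refine forall_congr' fun k => ?_
  have : (e + 1).toNat ≤ k ↔ e < k := by omega
  rw [this]

lemma Bd_mono {A : Type*} [CommRing A] {d e : ℤ} (h : d ≤ e) {p : Polynomial A}
    (hp : p ∈ Bd A d) : p ∈ Bd A e := by
  rw [mem_Bd] at *
  intro k hk
  exact hp k (by omega)

lemma Bd_mul {A : Type*} [CommRing A] {d e f : ℤ} {p q : Polynomial A}
    (hp : p ∈ Bd A d) (hq : q ∈ Bd A e) (h : d + e = f) : p * q ∈ Bd A f := by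
  rw [mem_Bd] at *
  intro k hk
  rw [Polynomial.coeff_mul]
  refine Finset.sum_eq_zero fun x hx => ?_
  rw [Finset.HasAntidiagonal.mem_antidiagonal] at hx
  by_cases h1 : d < x.1
  · rw [hp _ h1, zero_mul]
  · rw [hq x.2 (by omega), mul_zero]

lemma Bd_X_mul {A : Type*} [CommRing A] {d : ℤ} {p : Polynomial A} :
    Polynomial.X * p ∈ Bd A (d + 1) ↔ p ∈ Bd A d := by
  rw [mem_Bd, mem_Bd]
  constructor
  · intro h k hk
    have := h (k + 1) (by push_cast; omega)
    rwa [Polynomial.coeff_X_mul] at this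
  · intro h k hk
    cases k with
    | zero => simp
    | succ k =>
      rw [Polynomial.coeff_X_mul]
      exact h k (by push_cast at hk; omega)

variable {K : Type*} [Field K]

instance Bd_fin (e : ℤ) : FiniteDimensional K (Bd K e) := by
  unfold Bd
  exact Module.Finite.equiv (Polynomial.degreeLTEquiv K (e + 1).toNat).symm

lemma finrank_Bd (e : ℤ) : Module.finrank K (Bd K e) = (e + 1).toNat := by
  unfold Bd
  rw [(Polynomial.degreeLTEquiv K (e + 1).toNat).finrank_eq]
  simp

/-- tuples with degree bounds -/
abbrev BdT {N : ℕ} (a : Fin N → ℤ) (d : ℤ) : Submodule K (Fin N → Polynomial K) :=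
  Submodule.pi Set.univ fun i => Bd K (d - a i)

lemma mem_BdT {N : ℕ} {a : Fin N → ℤ} {d : ℤ} {v : Fin N → Polynomial K} :
    v ∈ BdT a d ↔ ∀ i, v i ∈ Bd K (d - a i) := by
  simp [BdT, Submodule.mem_pi]

/-- `BdT` as a product. -/
def BdTequiv {N : ℕ} (a : Fin N → ℤ) (d : ℤ) :
    (BdT (K := K) a d) ≃ₗ[K] ((i : Fin N) → Bd K (d - a i)) where
  toFun v := fun i => ⟨v.1 i, mem_BdT.1 v.2 i⟩
  invFun w := ⟨fun i => (w i).1, mem_BdT.2 fun i => (w i).2⟩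
  map_add' _ _ := rfl
  map_smul' _ _ := rfl
  left_inv _ := rfl
  right_inv _ := rfl

instance BdT_fin {N : ℕ} (a : Fin N → ℤ) (d : ℤ) : FiniteDimensional K (BdT (K := K) a d) :=
  Module.Finite.equiv (BdTequiv a d).symm

lemma finrank_BdT {N : ℕ} (a : Fin N → ℤ) (d : ℤ) :
    Module.finrank K (BdT (K := K) a d) = ∑ i, (d - a i + 1).toNat := by
  rw [(BdTequiv a d).finrank_eq, Module.finrank_pi_fintype]
  simp [finrank_Bd]

lemma finrank_BdT_large {N : ℕ} (a : Fin N → ℤ) (d : ℤ) (h : ∀ i, a i ≤ d) :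
    (Module.finrank K (BdT (K := K) a d) : ℤ) = N * (d + 1) - ∑ i, a i := by
  rw [finrank_BdT]
  push_cast
  have : ∀ i, max (d - a i + 1) 0 = (d + 1) - a i := fun i => by
    have := h i; omega
  simp [this, Finset.sum_sub_distrib]

variable {n : ℕ} (a : Fin (n + 2) → ℤ) (b : Fin n → ℤ)
  (Ψ : Matrix (Fin n) (Fin (n + 2)) (Polynomial K))

/-- the degree `d` piece of the kernel on the line -/
def Npr (d : ℤ) : Submodule K (Fin (n + 2) → Polynomial K) :=
  BdT a d ⊓ LinearMap.ker ((Matrix.mulVecLin Ψ).restrictScalars K)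

variable {a b Ψ}

lemma mem_Npr {d : ℤ} {v : Fin (n + 2) → Polynomial K} :
    v ∈ Npr a Ψ d ↔ (∀ i, v i ∈ Bd K (d - a i)) ∧ Ψ.mulVec v = 0 := by
  rw [Npr, Submodule.mem_inf, mem_BdT]
  simp

instance Npr_fin (d : ℤ) : FiniteDimensional K (Npr a Ψ d) :=
  Submodule.finiteDimensional_of_le (inf_le_left : Npr a Ψ d ≤ BdT a d)

lemma mulVec_mem (hΨ : ∀ j i, Ψ j i ∈ Bd K (a i - b j)) {d : ℤ}
    {v : Fin (n + 2) → Polynomial K} (hv : ∀ i, v i ∈ Bd K (d - a i)) (j : Fin n) :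
    (Ψ.mulVec v) j ∈ Bd K (d - b j) := by
  rw [Matrix.mulVec, dotProduct]
  exact Submodule.sum_mem _ fun i _ => Bd_mul (hΨ j i) (hv i) (by ring)

/-- all degree-`d` targets are hit -/
def SurjAt (a : Fin (n + 2) → ℤ) (b : Fin n → ℤ)
    (Ψ : Matrix (Fin n) (Fin (n + 2)) (Polynomial K)) (d : ℤ) : Prop :=
  ∀ g : Fin n → Polynomial K, (∀ j, g j ∈ Bd K (d - b j)) →
    ∃ f : Fin (n + 2) → Polynomial K, (∀ i, f i ∈ Bd K (d - a i)) ∧ Ψ.mulVec f = g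

lemma finrank_Npr (hΨ : ∀ j i, Ψ j i ∈ Bd K (a i - b j)) {m d : ℤ}
    (hm : (∑ i, a i) - (∑ j, b j) = 2 * m + 1) (hs : SurjAt a b Ψ d)
    (ha : ∀ i, a i ≤ d) (hb : ∀ j, b j ≤ d) :
    (Module.finrank K (Npr a Ψ d) : ℤ) = 2 * d + 1 - 2 * m := by
  let f : BdT (K := K) a d →ₗ[K] BdT (K := K) b d :=
    LinearMap.restrict ((Matrix.mulVecLin Ψ).restrictScalars K)
      (fun v hv => mem_BdT.2 (mulVec_mem hΨ (mem_BdT.1 hv)))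
  have hf : LinearMap.range f = ⊤ := by
    rw [LinearMap.range_eq_top]
    rintro ⟨g, hg⟩
    obtain ⟨v, hv, h⟩ := hs g (mem_BdT.1 hg)
    exact ⟨⟨v, mem_BdT.2 hv⟩, Subtype.ext h⟩
  have hk : Module.finrank K (LinearMap.ker f) = Module.finrank K (Npr a Ψ d) := by
    have : (LinearMap.ker f).map (BdT (K := K) a d).subtype = Npr a Ψ d := by
      ext v
      simp only [Submodule.mem_map, Npr, Submodule.mem_inf]
      constructor
      · rintro ⟨w, hw, rfl⟩
        refine ⟨w.2, ?_⟩
        have := congrArg Subtype.val (LinearMap.mem_ker.1 hw)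
        exact this
      · rintro ⟨h1, h2⟩
        exact ⟨⟨v, h1⟩, LinearMap.mem_ker.2 (Subtype.ext h2), rfl⟩
    rw [← this]
    exact (Submodule.finrank_map_subtype_eq _ _).symm
  have := LinearMap.finrank_range_add_finrank_ker f
  rw [hf, finrank_top, hk] at this
  have h1 := finrank_BdT_large (K := K) a d ha
  have h2 := finrank_BdT_large (K := K) b d hb
  push_cast at h1
  have : (Module.finrank K (BdT (K := K) b d) : ℤ) + Module.finrank K (Npr a Ψ d) =
    Module.finrank K (BdT (K := K) a d) := by exact_mod_cast this
  linarith

/-- multiplication by `f` -/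
def smulMap {N : ℕ} (v : Fin N → Polynomial K) : Polynomial K →ₗ[K] (Fin N → Polynomial K) :=
  (LinearMap.toSpanSingleton (Polynomial K) _ v).restrictScalars K

lemma wedge_zero (hΨ : ∀ j i, Ψ j i ∈ Bd K (a i - b j)) {m : ℤ}
    (hm : (∑ i, a i) - (∑ j, b j) = 2 * m + 1) (hs : ∃ D, ∀ d, D ≤ d → SurjAt a b Ψ d)
    {v w : Fin (n + 2) → Polynomial K} (hv : v ∈ Npr a Ψ (m - 1)) (hw : w ∈ Npr a Ψ m)
    (p q : Fin (n + 2)) : v p * w q = v q * w p := by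
  by_contra hne
  obtain ⟨D, hD⟩ := hs
  obtain ⟨d, h1, h2, h3, h4⟩ : ∃ d : ℤ, D ≤ d ∧ (∀ i, a i ≤ d) ∧ (∀ j, b j ≤ d) ∧ m ≤ d := by
    obtain ⟨A, hA⟩ := (Set.finite_range a).bddAbove
    obtain ⟨B, hB⟩ := (Set.finite_range b).bddAbove
    exact ⟨max (max D A) (max B m), by simp, fun i => le_trans (hA ⟨i, rfl⟩) (by simp),
      fun i => le_trans (hB ⟨i, rfl⟩) (by simp), by simp⟩
  have hr := finrank_Npr hΨ hm (hD d h1) h2 h3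
  rw [mem_Npr] at hv hw
  let f : (Bd K (d - (m - 1)) × Bd K (d - m)) →ₗ[K] Npr a Ψ d :=
    LinearMap.codRestrict _
      ((smulMap v ∘ₗ (Bd K (d - (m - 1))).subtype).coprod (smulMap w ∘ₗ (Bd K (d - m)).subtype))
      (by
        rintro ⟨⟨x, hx⟩, ⟨y, hy⟩⟩
        rw [mem_Npr]
        refine ⟨fun i => ?_, ?_⟩
        · exact Submodule.add_mem _ (Bd_mul hx (hv.1 i) (by ring)) (Bd_mul hy (hw.1 i) (by ring))
        · show Ψ.mulVec (x • v + y • w) = 0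
          rw [Matrix.mulVec_add, Matrix.mulVec_smul, Matrix.mulVec_smul, hv.2, hw.2]
          simp)
  have hinj : Function.Injective f := by
    rw [← LinearMap.ker_eq_bot, LinearMap.ker_eq_bot']
    rintro ⟨⟨x, hx⟩, ⟨y, hy⟩⟩ h
    have h' : x • v + y • w = 0 := congrArg Subtype.val h
    have hp : x * v p + y * w p = 0 := congrFun h' p
    have hq : x * v q + y * w q = 0 := congrFun h' q
    have hne' : v p * w q - v q * w p ≠ 0 := sub_ne_zero.2 hne
    have hx0 : x = 0 := by
      have : x * (v p * w q - v q * w p) = 0 := by linear_combination w q * hp - w p * hq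
      exact (mul_eq_zero.1 this).resolve_right hne'
    have hy0 : y = 0 := by
      have : y * (v p * w q - v q * w p) = 0 := by linear_combination v p * hq - v q * hp
      exact (mul_eq_zero.1 this).resolve_right hne'
    subst hx0 hy0
    rfl
  have hle := LinearMap.finrank_le_finrank_of_injective hinj
  rw [Module.finrank_prod, finrank_Bd, finrank_Bd] at hle
  omega

lemma Npr_mono {d e : ℤ} (h : d ≤ e) : Npr a Ψ d ≤ Npr a Ψ e := by
  intro v hv
  rw [mem_Npr] at *
  exact ⟨fun i => Bd_mono (by omega) (hv.1 i), hv.2⟩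

/-- multiplication by `X` on tuples -/
def mulX (K : Type*) [Field K] (N : ℕ) : (Fin N → Polynomial K) →ₗ[K] (Fin N → Polynomial K) :=
  ((LinearMap.lsmul (Polynomial K) (Fin N → Polynomial K)) Polynomial.X).restrictScalars K

lemma mulX_apply {N : ℕ} (v : Fin N → Polynomial K) (i : Fin N) :
    mulX K N v i = Polynomial.X * v i := rfl

lemma mulX_inj (N : ℕ) : Function.Injective (mulX K N) := by
  intro v w h
  funext i
  exact mul_left_cancel₀ Polynomial.X_ne_zero (congrFun h i)

lemma mulVec_mulX (v : Fin (n + 2) → Polynomial K) :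
    Ψ.mulVec (mulX K (n + 2) v) = mulX K n (Ψ.mulVec v) := by
  have h1 : mulX K (n + 2) v = (Polynomial.X : Polynomial K) • v := rfl
  have h2 : mulX K n (Ψ.mulVec v) = (Polynomial.X : Polynomial K) • (Ψ.mulVec v) := rfl
  rw [h1, h2, Matrix.mulVec_smul]

lemma mulX_mem {d : ℤ} {v : Fin (n + 2) → Polynomial K} :
    mulX K (n + 2) v ∈ Npr a Ψ (d + 1) ↔ v ∈ Npr a Ψ d := by
  rw [mem_Npr, mem_Npr, mulVec_mulX]
  refine and_congr (forall_congr' fun i => ?_) ?_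
  · rw [mulX_apply, show d + 1 - a i = (d - a i) + 1 by ring, Bd_X_mul]
  · constructor
    · intro h
      exact mulX_inj n (by rw [h, map_zero])
    · intro h
      rw [h, map_zero]

lemma Npr_convex (j : ℤ) :
    2 * Module.finrank K (Npr a Ψ j) ≤
      Module.finrank K (Npr a Ψ (j + 1)) + Module.finrank K (Npr a Ψ (j - 1)) ∧
    (2 * Module.finrank K (Npr a Ψ j) =
      Module.finrank K (Npr a Ψ (j + 1)) + Module.finrank K (Npr a Ψ (j - 1)) →
      Npr a Ψ j ⊔ (Npr a Ψ j).map (mulX K (n + 2)) = Npr a Ψ (j + 1)) := by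
  have hle : Npr a Ψ j ⊔ (Npr a Ψ j).map (mulX K (n + 2)) ≤ Npr a Ψ (j + 1) := by
    refine sup_le (Npr_mono (by omega)) ?_
    rintro _ ⟨v, hv, rfl⟩
    exact mulX_mem.2 hv
  have hinf : Npr a Ψ j ⊓ (Npr a Ψ j).map (mulX K (n + 2)) =
      (Npr a Ψ (j - 1)).map (mulX K (n + 2)) := by
    ext v
    rw [Submodule.mem_inf, Submodule.mem_map, Submodule.mem_map]
    constructor
    · rintro ⟨h1, w, hw, rfl⟩
      refine ⟨w, ?_, rfl⟩
      rw [← mulX_mem]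
      simpa using h1
    · rintro ⟨w, hw, rfl⟩
      refine ⟨?_, w, Npr_mono (by omega) hw, rfl⟩
      have := mulX_mem.2 hw
      simpa using this
  have e1 := Submodule.finrank_sup_add_finrank_inf_eq (Npr a Ψ j)
    ((Npr a Ψ j).map (mulX K (n + 2)))
  have e3 : ∀ p : Submodule K (Fin (n + 2) → Polynomial K),
      Module.finrank K (p.map (mulX K (n + 2))) = Module.finrank K p := fun p =>
    (LinearEquiv.finrank_eq (Submodule.equivMapOfInjective _ (mulX_inj (n + 2)) p)).symm
  rw [hinf, e3, e3] at e1
  have e2 := Submodule.finrank_mono hle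
  refine ⟨by omega, fun h => Submodule.eq_of_le_of_finrank_le hle (by omega)⟩

lemma seq_lemma (γ : ℕ → ℤ) (h0 : γ 0 = -1)
    (hc : ∀ k, γ (k + 2) + γ k ≤ 2 * γ (k + 1)) (hev : ∃ k0, ∀ k, k0 ≤ k → γ k = 0) :
    ∀ k, 1 ≤ k → γ k = 0 := by
  obtain ⟨k0, hk0⟩ := hev
  let δ : ℕ → ℤ := fun k => γ (k + 1) - γ k
  have hδ : Antitone δ := antitone_nat_of_succ_le fun k => by
    have := hc k
    show γ (k + 1 + 1) - γ (k + 1) ≤ γ (k + 1) - γ k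
    linarith
  have hδ0 : ∀ k, 0 ≤ δ k := fun k => by
    have h1 := hδ (le_max_left k k0)
    have : δ (max k k0) = 0 := by
      show γ (max k k0 + 1) - γ (max k k0) = 0
      rw [hk0 _ (by omega), hk0 _ (by omega)]; rfl
    omega
  have hmono : Monotone γ := monotone_nat_of_le_succ fun k => by
    have := hδ0 k
    show γ k ≤ γ (k + 1)
    have h : δ k = γ (k + 1) - γ k := rfl
    omega
  have hle : ∀ k, γ k ≤ 0 := fun k => by
    have := hmono (le_max_left k k0)
    rw [hk0 (max k k0) (by omega)] at this
    exact this
  have h1 : γ 1 = 0 := by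
    by_contra hne
    have hd : δ 0 = γ 1 - γ 0 := rfl
    have := hδ0 0
    have := hle 1
    have hz : δ 0 = 0 := by omega
    have hall : ∀ k, γ k = -1 := by
      intro k
      induction k with
      | zero => exact h0
      | succ k ih =>
        have h1 := hδ (Nat.zero_le k)
        have h2 := hδ0 k
        have h3 : δ k = γ (k + 1) - γ k := rfl
        omega
    have := hall k0
    rw [hk0 k0 le_rfl] at this
    omega
  intro k hk
  have := hmono hk
  have := hle k
  omega

lemma surj_of_bot (hΨ : ∀ j i, Ψ j i ∈ Bd K (a i - b j)) {m : ℤ}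
    (hm : (∑ i, a i) - (∑ j, b j) = 2 * m + 1) (hs : ∃ D, ∀ d, D ≤ d → SurjAt a b Ψ d)
    (h0 : Npr a Ψ (m - 1) = ⊥) (d : ℤ) (hd : m ≤ d) : SurjAt a b Ψ d := by
  obtain ⟨D, hD⟩ := hs
  have hh : ∀ d : ℤ, m ≤ d → (Module.finrank K (Npr a Ψ d) : ℤ) = 2 * d + 1 - 2 * m := by
    intro d hd
    have := seq_lemma (fun k => 2 * (m - 1 + k) + 1 - 2 * m -
      (Module.finrank K (Npr a Ψ (m - 1 + k)) : ℤ)) (by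
        have e : m - 1 + ((0 : ℕ) : ℤ) = m - 1 := by simp
        rw [e, h0, finrank_bot]; push_cast; ring) (by
        intro k
        have := (Npr_convex (a := a) (Ψ := Ψ) (m - 1 + (k + 1))).1
        rw [show m - 1 + ((k : ℤ) + 1) + 1 = m - 1 + (k + 2) by ring,
          show m - 1 + ((k : ℤ) + 1) - 1 = m - 1 + k by ring] at this
        zify at this
        have e2 : ((k + 2 : ℕ) : ℤ) = (k : ℤ) + 2 := by push_cast; ring
        have e1 : ((k + 1 : ℕ) : ℤ) = (k : ℤ) + 1 := by push_cast; ring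
        rw [e1, e2]
        linarith) (by
        obtain ⟨A, hA⟩ := (Set.finite_range a).bddAbove
        obtain ⟨B, hB⟩ := (Set.finite_range b).bddAbove
        refine ⟨(max (max D A) B - (m - 1)).toNat, fun k hk => ?_⟩
        have h1 : max (max D A) B ≤ m - 1 + k := by omega
        have := finrank_Npr hΨ hm (hD (m - 1 + k) (by omega))
          (fun i => by have := hA ⟨i, rfl⟩; omega) (fun i => by have := hB ⟨i, rfl⟩; omega)
        linarith) (d - (m - 1)).toNat (by omega)
    have e : m - 1 + ((d - (m - 1)).toNat : ℤ) = d := by omega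
    rw [e] at this
    linarith
  have key : ∀ k : ℕ, ∀ d : ℤ, m ≤ d → D ≤ d + k → SurjAt a b Ψ d := by
    intro k
    induction k with
    | zero => intro d _ h; exact hD d (by simpa using h)
    | succ k ih =>
      intro d hd h g hg
      have ih' := ih (d + 1) (by omega) (by push_cast at h; omega)
      obtain ⟨f1, hf1, e1⟩ := ih' g (fun j => Bd_mono (by omega) (hg j))
      obtain ⟨f0, hf0, e0⟩ := ih' (mulX K n g) (fun j => by
        rw [mulX_apply, show d + 1 - b j = (d - b j) + 1 by ring, Bd_X_mul]; exact hg j)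
      have hmem : mulX K (n + 2) f1 - f0 ∈ Npr a Ψ (d + 1 + 1) := by
        rw [mem_Npr]
        refine ⟨fun i => ?_, ?_⟩
        · refine Submodule.sub_mem _ ?_ (Bd_mono (by omega) (hf0 i))
          rw [mulX_apply, show d + 1 + 1 - a i = (d + 1 - a i) + 1 by ring, Bd_X_mul]
          exact hf1 i
        · rw [Matrix.mulVec_sub, mulVec_mulX, e1, e0, sub_self]
      have hgen := (Npr_convex (a := a) (Ψ := Ψ) (d + 1)).2 (by
        zify
        rw [hh _ (by omega), hh _ (by omega), hh _ (by omega)]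
        ring)
      rw [← hgen, Submodule.mem_sup] at hmem
      obtain ⟨n0, hn0, _, ⟨n1, hn1, rfl⟩, hsum⟩ := hmem
      have hx : mulX K (n + 2) (f1 - n1) = f0 + n0 := by
        rw [map_sub, sub_eq_iff_eq_add, add_assoc, hsum]
        abel
      rw [SetLike.mem_coe, mem_Npr] at hn1
      rw [mem_Npr] at hn0
      refine ⟨f1 - n1, fun i => ?_, ?_⟩
      · rw [← Bd_X_mul, ← mulX_apply, hx, show d - a i + 1 = d + 1 - a i by ring]
        exact Submodule.add_mem _ (hf0 i) (hn0.1 i)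
      · rw [Matrix.mulVec_sub, e1, hn1.2, sub_zero]
  exact key (D - d).toNat d hd (by omega)

end lineLemmas

noncomputable section transLemmas

variable {K : Type*} [Field K]

lemma homog_weight (u : Fin 3 →₀ ℕ) :
    Finsupp.weight (fun _ : Fin 3 => (1 : ℤ)) u = (u 0 : ℤ) + u 1 + u 2 := by
  rw [Finsupp.weight_apply, Finsupp.sum_fintype _ _ (by simp)]
  simp [Fin.sum_univ_three]

lemma mono_eq (u : Fin 3 →₀ ℕ) (c : K) :
    monomial u c = C c * (X 0 ^ u 0 * X 1 ^ u 1 * X 2 ^ u 2) := by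
  rw [monomial_eq, Finsupp.prod_fintype _ _ (by simp), Fin.prod_univ_three]

lemma homog_mono (i j k : ℕ) (d : ℤ) (h : (i : ℤ) + j + k = d) :
    homog (X 0 ^ i * X 1 ^ j * X 2 ^ k : MvPolynomial (Fin 3) K) d := by
  have hX := fun i => isWeightedHomogeneous_X K (fun _ : Fin 3 => (1 : ℤ)) i
  have := (((hX 0).pow i).mul ((hX 1).pow j)).mul ((hX 2).pow k)
  rw [homog]
  convert this using 1
  simp [← h]

lemma homog_C_mul {p : MvPolynomial (Fin 3) K} {d : ℤ} (c : K) (h : homog p d) :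
    homog (C c * p) d := h.C_mul c

lemma homog_sum {ι : Type*} (s : Finset ι) (f : ι → MvPolynomial (Fin 3) K) (d : ℤ)
    (h : ∀ i ∈ s, homog (f i) d) : homog (∑ i ∈ s, f i) d :=
  IsWeightedHomogeneous.sum s f d h

lemma homog_mul {p q : MvPolynomial (Fin 3) K} {d e f : ℤ} (hp : homog p d) (hq : homog q e)
    (h : d + e = f) : homog (p * q) f := by
  subst h
  exact hp.mul hq

/-- induction for homogeneous polynomials -/
lemma homog_ind {d : ℤ} (P : MvPolynomial (Fin 3) K → Prop) (h0 : P 0)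
    (hadd : ∀ p q, P p → P q → P (p + q))
    (hmono : ∀ (c : K) (i j k : ℕ), (i : ℤ) + j + k = d →
      P (C c * (X 0 ^ i * X 1 ^ j * X 2 ^ k)))
    {p : MvPolynomial (Fin 3) K} (hp : homog p d) : P p := by
  rw [p.as_sum]
  refine Finset.sum_induction _ P hadd h0 fun u hu => ?_
  rw [mono_eq]
  refine hmono _ _ _ _ ?_
  rw [← homog_weight]
  exact hp (mem_support_iff.1 hu)

/-- restriction to the line `x₂ = s x₀ + t x₁`, dehomogenized by `x₁ = 1` -/
def rho (K : Type*) [Field K] {A : Type*} [CommRing A] [Algebra K A] (s t : A) :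
    MvPolynomial (Fin 3) K →ₐ[K] Polynomial A :=
  aeval ![Polynomial.X, 1, Polynomial.C s * Polynomial.X + Polynomial.C t]

section
variable {A : Type*} [CommRing A] [Algebra K A]

lemma rho_mono (s t : A) (c : K) (i j k : ℕ) :
    rho K s t (C c * (X 0 ^ i * X 1 ^ j * X 2 ^ k)) =
      Polynomial.C (algebraMap K A c) * (Polynomial.X ^ i *
        (Polynomial.C s * Polynomial.X + Polynomial.C t) ^ k) := by
  simp [rho, algHom_C, Polynomial.algebraMap_apply]

lemma Bd_pow {e : ℤ} {p : Polynomial A} (hp : p ∈ Bd A e) (k : ℕ) : p ^ k ∈ Bd A (k * e) := by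
  induction k with
  | zero =>
    rw [mem_Bd]
    intro k hk
    simp only [Nat.cast_zero, zero_mul] at hk
    rw [pow_zero, Polynomial.coeff_one, if_neg (by omega)]
  | succ k ih =>
    rw [pow_succ]
    exact Bd_mul ih hp (by push_cast; ring)

lemma Bd_X : (Polynomial.X : Polynomial A) ∈ Bd A 1 := by
  rw [mem_Bd]
  intro k hk
  rw [Polynomial.coeff_X, if_neg (by omega)]

lemma Bd_lin (s t : A) : Polynomial.C s * Polynomial.X + Polynomial.C t ∈ Bd A 1 := by
  rw [mem_Bd]
  intro k hk
  rw [Polynomial.coeff_add, Polynomial.coeff_C_mul, Polynomial.coeff_X, Polynomial.coeff_C,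
    if_neg (by omega), if_neg (by omega)]
  simp

lemma Bd_C_mul {e : ℤ} {p : Polynomial A} (c : A) (hp : p ∈ Bd A e) :
    Polynomial.C c * p ∈ Bd A e := by
  rw [← Polynomial.smul_eq_C_mul]
  exact Submodule.smul_mem _ _ hp

lemma rho_mem (s t : A) {d : ℤ} {p : MvPolynomial (Fin 3) K} (hp : homog p d) :
    rho K s t p ∈ Bd A d := by
  refine homog_ind (fun p => rho K s t p ∈ Bd A d) ?_ ?_ ?_ hp
  · simp
  · intro p q hp hq
    rw [map_add]; exact Submodule.add_mem _ hp hq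
  · intro c i j k h
    rw [rho_mono]
    refine Bd_C_mul _ (Bd_mono ?_ (Bd_mul (Bd_pow Bd_X i) (Bd_pow (Bd_lin s t) k) rfl))
    omega

end

lemma rho_surj (s t : K) {d : ℤ} {g : Polynomial K} (hg : g ∈ Bd K d) :
    ∃ p, homog p d ∧ rho K s t p = g := by
  rw [mem_Bd] at hg
  refine ⟨∑ k ∈ g.support, C (g.coeff k) * (X 0 ^ k * X 1 ^ (d - k).toNat * X 2 ^ 0), ?_, ?_⟩
  · refine homog_sum _ _ _ fun k hk => homog_C_mul _ (homog_mono _ _ _ _ ?_)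
    have : ¬ d < k := fun h => Polynomial.mem_support_iff.1 hk (hg k h)
    omega
  · rw [map_sum]
    simp only [rho_mono]
    simpa using g.as_sum_support_C_mul_X_pow.symm

lemma eval_scale {d : ℤ} {p : MvPolynomial (Fin 3) K} (hp : homog p d) {l : K} (hl : l ≠ 0)
    (x : Fin 3 → K) : eval (fun i => l * x i) p = l ^ d * eval x p := by
  refine homog_ind (fun p => eval (fun i => l * x i) p = l ^ d * eval x p) ?_ ?_ ?_ hp
  · simp
  · intro p q hp hq
    simp only [map_add, hp, hq]; ring
  · rintro c i j k rfl
    rw [zpow_add₀ hl, zpow_add₀ hl]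
    simp only [map_mul, map_pow, eval_C, eval_X, zpow_natCast]
    ring

lemma eq_zero_of_chart [Infinite K] {d : ℤ} {p : MvPolynomial (Fin 3) K} (hp : homog p d)
    (h : ∀ x z : K, eval ![x, 1, z] p = 0) : p = 0 := by
  have : X 1 * p = 0 := by
    refine MvPolynomial.funext fun c => ?_
    rw [map_mul, eval_X, map_zero]
    by_cases hc : c 1 = 0
    · rw [hc, zero_mul]
    · have e : c = fun i => c 1 * (![c 0 / c 1, 1, c 2 / c 1] : Fin 3 → K) i := by
        funext i
        fin_cases i <;> simp <;> field_simp
      rw [e, eval_scale hp hc, h]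
      simp
  exact (mul_eq_zero.1 this).resolve_left (X_ne_zero 1)

/-- the affine chart `x₁ = 1` -/
def eta (K : Type*) [Field K] : MvPolynomial (Fin 3) K →ₐ[K] MvPolynomial (Fin 2) K :=
  aeval ![X 0, 1, X 1]

lemma eta_inj [Infinite K] {d : ℤ} {p : MvPolynomial (Fin 3) K} (hp : homog p d)
    (h : eta K p = 0) : p = 0 := by
  refine eq_zero_of_chart hp fun x z => ?_
  have e : (aeval ![x, z] : MvPolynomial (Fin 2) K →ₐ[K] K).comp (eta K) =
      aeval ![x, 1, z] := by
    refine MvPolynomial.algHom_ext fun i => ?_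
    fin_cases i <;> simp [eta]
  have := congrArg (aeval ![x, z] : MvPolynomial (Fin 2) K →ₐ[K] K) h
  rw [← AlgHom.comp_apply, e, map_zero] at this
  simpa [aeval_eq_eval] using this

lemma eta_surj {d : ℤ} {r : MvPolynomial (Fin 2) K}
    (hr : ∀ u, coeff u r ≠ 0 → (u 0 : ℤ) + u 1 ≤ d) :
    ∃ p, homog p d ∧ eta K p = r := by
  refine ⟨∑ u ∈ r.support, C (coeff u r) *
    (X 0 ^ (u 0) * X 1 ^ (d - u 0 - u 1).toNat * X 2 ^ (u 1)), ?_, ?_⟩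
  · refine homog_sum _ _ _ fun u hu => homog_C_mul _ (homog_mono _ _ _ _ ?_)
    have := hr u (mem_support_iff.1 hu)
    omega
  · rw [map_sum]
    conv_rhs => rw [r.as_sum]
    refine Finset.sum_congr rfl fun u _ => ?_
    rw [monomial_eq, Finsupp.prod_fintype _ _ (by simp), Fin.prod_univ_two]
    simp [eta, algHom_C]

/-- the equation of the line -/
def lineEq (s t : K) : MvPolynomial (Fin 3) K := X 2 - (C s * X 0 + C t * X 1)

lemma sigma_div (s t : K) {d : ℤ} {p : MvPolynomial (Fin 3) K} (hp : homog p d) :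
    ∃ q, homog q (d - 1) ∧
      p - aeval ![X 0, X 1, C s * X 0 + C t * X 1] p = lineEq s t * q := by
  have hX := fun i => isWeightedHomogeneous_X K (fun _ : Fin 3 => (1 : ℤ)) i
  have hl : homog (C s * X 0 + C t * X 1 : MvPolynomial (Fin 3) K) 1 :=
    ((hX 0).C_mul s).add ((hX 1).C_mul t)
  refine homog_ind (fun p => ∃ q, homog q (d - 1) ∧
      p - aeval ![X 0, X 1, C s * X 0 + C t * X 1] p = lineEq s t * q) ?_ ?_ ?_ hp
  · exact ⟨0, isWeightedHomogeneous_zero _ _ _, by simp⟩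
  · rintro p q ⟨p', h1, h2⟩ ⟨q', h3, h4⟩
    exact ⟨p' + q', h1.add h3, by rw [map_add, mul_add, ← h2, ← h4]; ring⟩
  · intro c i j k h
    refine ⟨C c * ((X 0 ^ i * X 1 ^ j * X 2 ^ 0) * ∑ a ∈ Finset.range k, X 2 ^ a * (C s * X 0 + C t * X 1) ^ (k - 1 - a)), ?_, ?_⟩
    · refine homog_C_mul _ (homog_mul (homog_mono i j 0 _ rfl) (homog_sum _ _ (k - 1) ?_)
        (by push_cast; omega))
      intro a ha
      rw [Finset.mem_range] at ha
      refine homog_mul ((hX 2).pow a) (hl.pow (k - 1 - a)) ?_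
      simp
      omega
    · have := (Commute.all (X 2 : MvPolynomial (Fin 3) K) (C s * X 0 + C t * X 1)).mul_geom_sum₂ k
      simp only [map_mul, map_pow, aeval_X, algHom_C, algebraMap_eq]
      simp only [Matrix.cons_val_zero, Matrix.cons_val_one, Matrix.cons_val]
      rw [lineEq]
      linear_combination (-C c * X 0 ^ i * X 1 ^ j) * this

lemma line_dvd [Infinite K] (s t : K) {d : ℤ} {p : MvPolynomial (Fin 3) K} (hp : homog p d)
    (h : rho K s t p = 0) : ∃ q, homog q (d - 1) ∧ p = lineEq s t * q := by
  obtain ⟨q, hq, e⟩ := sigma_div s t hp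
  refine ⟨q, hq, ?_⟩
  have hL : homog (lineEq s t) 1 := by
    have hX := fun i => isWeightedHomogeneous_X K (fun _ : Fin 3 => (1 : ℤ)) i
    exact (hX 2).sub (((hX 0).C_mul s).add ((hX 1).C_mul t))
  have hs : homog (aeval ![X 0, X 1, C s * X 0 + C t * X 1] p) d := by
    have : (aeval ![X 0, X 1, C s * X 0 + C t * X 1] p : MvPolynomial (Fin 3) K) = p - lineEq s t * q := by
      rw [← e]; ring
    rw [this]
    exact hp.sub (homog_mul hL hq (by ring))
  have : aeval ![X 0, X 1, C s * X 0 + C t * X 1] p = (0 : MvPolynomial (Fin 3) K) := by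
    refine eq_zero_of_chart hs fun x z => ?_
    have h1 : ((aeval ![x, 1, z] : MvPolynomial (Fin 3) K →ₐ[K] K).comp
        (aeval ![X 0, X 1, C s * X 0 + C t * X 1])) =
        (Polynomial.aeval x : Polynomial K →ₐ[K] K).comp (rho K s t) := by
      refine MvPolynomial.algHom_ext fun i => ?_
      fin_cases i <;> simp [rho]
    have h2 := DFunLike.congr_fun h1 p
    rw [AlgHom.comp_apply, AlgHom.comp_apply, h, map_zero] at h2
    simpa [aeval_eq_eval] using h2
  rw [this, sub_zero] at e
  exact e

end transLemmas

noncomputable section generic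

variable {K : Type*} [Field K]

/-- Generic injectivity of a matrix of polynomials. -/
lemma dich {I J : Type*} [Fintype I] [Fintype J] [DecidableEq I]
    (T : Matrix J I (MvPolynomial (Fin 2) K)) :
    (∃ v : I → MvPolynomial (Fin 2) K, v ≠ 0 ∧ T.mulVec v = 0) ∨
    ∃ Q : MvPolynomial (Fin 2) K, Q ≠ 0 ∧ ∀ pt : Fin 2 → K, eval pt Q ≠ 0 →
      ∀ w : I → K, (T.map (eval pt)).mulVec w = 0 → w = 0 := by
  classical
  by_cases hT : ∃ v : I → MvPolynomial (Fin 2) K, v ≠ 0 ∧ T.mulVec v = 0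
  · exact Or.inl hT
  right
  push Not at hT
  let A := MvPolynomial (Fin 2) K
  let F := FractionRing A
  let T' : Matrix J I F := T.map (algebraMap A F)
  have hinjA : Function.Injective (algebraMap A F) := IsFractionRing.injective A F
  have hker : LinearMap.ker T'.mulVecLin = ⊥ := by
    rw [LinearMap.ker_eq_bot']
    intro w hw
    obtain ⟨⟨d, hd⟩, hdw⟩ := IsLocalization.exist_integer_multiples_of_finite
      (nonZeroDivisors A) w
    choose v hv using hdw
    have hv' : ∀ i, algebraMap A F (v i) = algebraMap A F d * w i := fun i => by
      rw [hv i, Algebra.smul_def]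
    have hTv : T.mulVec v = 0 := by
      funext j
      apply hinjA
      have h1 : algebraMap A F (T.mulVec v j) = algebraMap A F d * (T'.mulVec w j) := by
        simp only [Matrix.mulVec, dotProduct, map_sum, map_mul, Finset.mul_sum, T',
          Matrix.map_apply, hv']
        exact Finset.sum_congr rfl fun i _ => by ring
      have h2 : T'.mulVec w j = 0 := congrFun hw j
      rw [h1, h2]; simp
    have hv0 : v = 0 := by
      by_contra h
      exact hT v h hTv
    funext i
    have := hv' i
    rw [hv0, Pi.zero_apply, map_zero] at this
    refine (mul_eq_zero.1 this.symm).resolve_left ?_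
    exact fun h => nonZeroDivisors.ne_zero hd ((map_eq_zero_iff _ hinjA).1 h)
  obtain ⟨g, hg⟩ := LinearMap.exists_leftInverse_of_injective _ hker
  let S : Matrix I J F := LinearMap.toMatrix' g
  have hST : S * T' = 1 := by
    have : LinearMap.toMatrix' (g ∘ₗ T'.mulVecLin) = S * T' := by
      rw [LinearMap.toMatrix'_comp, ← Matrix.toLin'_apply', LinearMap.toMatrix'_toLin']
    rw [← this, hg, LinearMap.toMatrix'_id]
  obtain ⟨⟨Q, hQ⟩, hQS⟩ := IsLocalization.exist_integer_multiples_of_finite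
      (nonZeroDivisors A) (fun x : I × J => S x.1 x.2)
  choose S' hS' using hQS
  have hS'' : ∀ i j, algebraMap A F (S' (i, j)) = algebraMap A F Q * S i j := fun i j => by
    rw [hS' (i, j), Algebra.smul_def]
  refine ⟨Q, nonZeroDivisors.ne_zero hQ, fun pt hpt w hw => ?_⟩
  have hprod : ∀ i k, ∑ j, S' (i, j) * T j k = if i = k then Q else 0 := by
    intro i k
    apply hinjA
    have h1 := congrFun (congrFun hST i) k
    rw [Matrix.mul_apply, Matrix.one_apply] at h1
    rw [map_sum]
    simp only [map_mul, hS'']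
    have h2 : ∑ x, algebraMap A F Q * S i x * algebraMap A F (T x k) =
        algebraMap A F Q * ∑ j, S i j * T' j k := by
      rw [Finset.mul_sum]
      exact Finset.sum_congr rfl fun j _ => by simp [T', mul_assoc]
    rw [h2, h1]
    split_ifs <;> simp
  funext i
  have h3 : ∑ j, eval pt (S' (i, j)) * ((T.map (eval pt)).mulVec w j) = eval pt Q * w i := by
    simp only [Matrix.mulVec, dotProduct, Matrix.map_apply, Finset.mul_sum]
    rw [Finset.sum_comm]
    have : ∀ k, ∑ j, eval pt (S' (i, j)) * (eval pt (T j k) * w k) =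
        eval pt (if i = k then Q else 0) * w k := fun k => by
      rw [← hprod, map_sum, Finset.sum_mul]
      exact Finset.sum_congr rfl fun j _ => by rw [map_mul, mul_assoc]
    simp only [this]
    rw [Finset.sum_eq_single i]
    · simp
    · intro k _ hk
      rw [if_neg (Ne.symm hk)]; simp
    · simp
  rw [hw] at h3
  simp only [Pi.zero_apply, mul_zero, Finset.sum_const_zero] at h3
  exact (mul_eq_zero.1 h3.symm).resolve_left hpt

section vecOf
variable {A : Type*} [CommRing A] {N : ℕ} (e : Fin N → ℤ)

/-- polynomial tuple with given coefficients -/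
def vecOf (c : (Σ i : Fin N, Fin (e i + 1).toNat) → A) : Fin N → Polynomial A :=
  fun i => ∑ k : Fin (e i + 1).toNat, Polynomial.C (c ⟨i, k⟩) * Polynomial.X ^ (k : ℕ)

lemma coeff_vecOf (c : (Σ i : Fin N, Fin (e i + 1).toNat) → A) (i : Fin N)
    (k : Fin (e i + 1).toNat) : (vecOf e c i).coeff k = c ⟨i, k⟩ := by
  simp only [vecOf, Polynomial.finsetSum_coeff, Polynomial.coeff_C_mul_X_pow]
  rw [Finset.sum_eq_single k]
  · simp
  · intro l _ hl
    rw [if_neg]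
    intro h
    exact hl (Fin.ext h.symm)
  · simp

lemma vecOf_mem (c : (Σ i : Fin N, Fin (e i + 1).toNat) → A) (i : Fin N) :
    vecOf e c i ∈ Bd A (e i) := by
  refine Submodule.sum_mem _ fun k _ => Bd_C_mul _ (Bd_mono ?_ (Bd_pow Bd_X k))
  have := k.2
  omega

lemma vecOf_eq {v : Fin N → Polynomial A} (hv : ∀ i, v i ∈ Bd A (e i)) :
    vecOf e (fun x => (v x.1).coeff x.2) = v := by
  funext i
  ext l
  by_cases h : l < (e i + 1).toNat
  · exact coeff_vecOf e _ i ⟨l, h⟩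
  · rw [mem_Bd.1 (vecOf_mem e _ i) l (by omega), mem_Bd.1 (hv i) l (by omega)]

lemma coeff_mulVec_vecOf {n : ℕ} (Ψ : Matrix (Fin n) (Fin N) (Polynomial A))
    (c : (Σ i : Fin N, Fin (e i + 1).toNat) → A) (j : Fin n) (l : ℕ) :
    (Ψ.mulVec (vecOf e c) j).coeff l =
      ∑ x : (Σ i : Fin N, Fin (e i + 1).toNat),
        (Ψ j x.1 * Polynomial.X ^ (x.2 : ℕ)).coeff l * c x := by
  rw [Fintype.sum_sigma]
  simp only [Matrix.mulVec, dotProduct, vecOf, Polynomial.finsetSum_coeff, Finset.mul_sum]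
  refine Finset.sum_congr rfl fun i _ => Finset.sum_congr rfl fun k _ => ?_
  rw [show Ψ j i * (Polynomial.C (c ⟨i, k⟩) * Polynomial.X ^ (k : ℕ)) =
    (Ψ j i * Polynomial.X ^ (k : ℕ)) * Polynomial.C (c ⟨i, k⟩) by ring, Polynomial.coeff_mul_C]

end vecOf

lemma gen_dich {n N : ℕ} (e : Fin N → ℤ)
    (Ψ : Matrix (Fin n) (Fin N) (Polynomial (MvPolynomial (Fin 2) K))) :
    (∃ v : Fin N → Polynomial (MvPolynomial (Fin 2) K), v ≠ 0 ∧
      (∀ i, v i ∈ Bd _ (e i)) ∧ Ψ.mulVec v = 0) ∨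
    ∃ Q : MvPolynomial (Fin 2) K, Q ≠ 0 ∧ ∀ pt : Fin 2 → K, eval pt Q ≠ 0 →
      ∀ w : Fin N → Polynomial K, (∀ i, w i ∈ Bd K (e i)) →
        (Ψ.map (Polynomial.map (eval pt))).mulVec w = 0 → w = 0 := by
  classical
  let D : ℕ := Finset.univ.sup fun y : Fin n × (Σ i : Fin N, Fin (e i + 1).toNat) =>
    (Ψ y.1 y.2.1 * Polynomial.X ^ (y.2.2 : ℕ)).natDegree
  have hD : ∀ j (x : Σ i : Fin N, Fin (e i + 1).toNat) (l : ℕ), D + 1 ≤ l →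
      (Ψ j x.1 * Polynomial.X ^ (x.2 : ℕ)).coeff l = 0 := by
    intro j x l hl
    apply Polynomial.coeff_eq_zero_of_natDegree_lt
    have := Finset.le_sup (f := fun y : Fin n × (Σ i : Fin N, Fin (e i + 1).toNat) =>
      (Ψ y.1 y.2.1 * Polynomial.X ^ (y.2.2 : ℕ)).natDegree) (Finset.mem_univ (j, x))
    exact lt_of_le_of_lt this hl
  let T : Matrix (Fin n × Fin (D + 1)) (Σ i : Fin N, Fin (e i + 1).toNat)
      (MvPolynomial (Fin 2) K) :=
    fun y x => (Ψ y.1 x.1 * Polynomial.X ^ (x.2 : ℕ)).coeff y.2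
  rcases dich T with ⟨c, hc, hT⟩ | ⟨Q, hQ, h⟩
  · left
    refine ⟨vecOf e c, ?_, vecOf_mem e c, ?_⟩
    · intro h0
      apply hc
      funext ⟨i, k⟩
      have h1 := coeff_vecOf e c i k
      rw [h0] at h1
      simpa using h1.symm
    · funext j
      ext1 l
      rw [coeff_mulVec_vecOf, Pi.zero_apply, Polynomial.coeff_zero]
      by_cases hl : l < D + 1
      · exact congrFun hT (j, ⟨l, hl⟩)
      · exact Finset.sum_eq_zero fun x _ => by rw [hD j x l (by omega), zero_mul]
  · right
    refine ⟨Q, hQ, fun pt hpt w hw hΨ => ?_⟩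
    have h1 := h pt hpt (fun x => (w x.1).coeff x.2) (by
      funext ⟨j, l⟩
      have h2 := coeff_mulVec_vecOf e (Ψ.map (Polynomial.map (eval pt)))
        (fun x => (w x.1).coeff x.2) j l
      rw [vecOf_eq e hw, hΨ] at h2
      rw [Pi.zero_apply, ← Polynomial.coeff_zero (l : ℕ)]
      rw [Pi.zero_apply] at h2
      rw [h2]
      refine Finset.sum_congr rfl fun x _ => ?_
      have e1 : (Ψ.map (Polynomial.map (eval pt))) j x.1 * Polynomial.X ^ (x.2 : ℕ) =
          Polynomial.map (eval pt) (Ψ j x.1 * Polynomial.X ^ (x.2 : ℕ)) := by simp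
      show eval pt ((Ψ j x.1 * Polynomial.X ^ (x.2 : ℕ)).coeff l) * _ = _
      rw [e1, Polynomial.coeff_map])
    rw [← vecOf_eq e hw, h1]
    funext i
    simp [vecOf]

end generic

noncomputable section grauert

variable {K : Type*} [Field K]

/-- The incidence variety in coordinates `(s; x, z)` versus `(x; s, t)`, `z = s x + t`. -/
def th (K : Type*) [Field K] :
    Polynomial (MvPolynomial (Fin 2) K) →+* Polynomial (MvPolynomial (Fin 2) K) :=
  Polynomial.eval₂RingHom
    (aeval ![Polynomial.X, Polynomial.C (X 0) * Polynomial.X + Polynomial.C (X 1)] :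
      MvPolynomial (Fin 2) K →ₐ[K] Polynomial (MvPolynomial (Fin 2) K)).toRingHom
    (Polynomial.C (X 0))

/-- inverse of `th` -/
def thInv (K : Type*) [Field K] :
    Polynomial (MvPolynomial (Fin 2) K) →+* Polynomial (MvPolynomial (Fin 2) K) :=
  Polynomial.eval₂RingHom
    (aeval ![Polynomial.X, Polynomial.C (X 1) - Polynomial.X * Polynomial.C (X 0)] :
      MvPolynomial (Fin 2) K →ₐ[K] Polynomial (MvPolynomial (Fin 2) K)).toRingHom
    (Polynomial.C (X 0))

lemma th_C (r : MvPolynomial (Fin 2) K) : th K (Polynomial.C r) =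
    aeval ![Polynomial.X, Polynomial.C (X 0) * Polynomial.X + Polynomial.C (X 1)] r := by
  simp [th]

lemma th_X : th K Polynomial.X = Polynomial.C (X 0) := by simp [th]

lemma thInv_C (r : MvPolynomial (Fin 2) K) : thInv K (Polynomial.C r) =
    aeval ![Polynomial.X, Polynomial.C (X 1) - Polynomial.X * Polynomial.C (X 0)] r := by
  simp [thInv]

lemma thInv_X : thInv K Polynomial.X = Polynomial.C (X 0) := by simp [thInv]

lemma th_CC (c : K) : th K (Polynomial.C (C c)) = Polynomial.C (C c) := by
  rw [th_C, algHom_C]; rfl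

lemma thInv_CC (c : K) : thInv K (Polynomial.C (C c)) = Polynomial.C (C c) := by
  rw [thInv_C, algHom_C]; rfl

lemma th_thInv (p : Polynomial (MvPolynomial (Fin 2) K)) : th K (thInv K p) = p := by
  have : (th K).comp (thInv K) = RingHom.id _ := by
    refine Polynomial.ringHom_ext' (MvPolynomial.ringHom_ext ?_ ?_) ?_
    · intro c
      simp only [RingHom.comp_apply, thInv_CC, th_CC, RingHom.id_apply]
    · intro i
      fin_cases i
      · simp [thInv_C, th_X]
      · simp [thInv_C, th_X, th_C]
    · simp [thInv_X, th_C]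
  exact RingHom.congr_fun this p

lemma thInv_th (p : Polynomial (MvPolynomial (Fin 2) K)) : thInv K (th K p) = p := by
  have : (thInv K).comp (th K) = RingHom.id _ := by
    refine Polynomial.ringHom_ext' (MvPolynomial.ringHom_ext ?_ ?_) ?_
    · intro c
      simp only [RingHom.comp_apply, thInv_CC, th_CC, RingHom.id_apply]
    · intro i
      fin_cases i
      · simp [thInv_X, th_C]
      · simp [thInv_C, thInv_X, th_C]
    · simp [th_X, thInv_C]
  exact RingHom.congr_fun this p

lemma rho_eq_th (p : MvPolynomial (Fin 3) K) :
    rho K (X 0 : MvPolynomial (Fin 2) K) (X 1) p = th K (Polynomial.C (eta K p)) := by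
  rw [th_C]
  have : rho K (X 0 : MvPolynomial (Fin 2) K) (X 1) =
      (aeval ![Polynomial.X, Polynomial.C (X 0) * Polynomial.X + Polynomial.C (X 1)]).comp
        (eta K) := by
    refine MvPolynomial.algHom_ext fun i => ?_
    fin_cases i <;> simp [rho, eta]
  rw [this]; rfl

/-- transported derivation -/
def Dd (p : Polynomial (MvPolynomial (Fin 2) K)) : Polynomial (MvPolynomial (Fin 2) K) :=
  th K (Polynomial.derivative (thInv K p))

lemma Dd_add (p q : Polynomial (MvPolynomial (Fin 2) K)) : Dd (p + q) = Dd p + Dd q := by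
  simp [Dd]

lemma Dd_mul (p q : Polynomial (MvPolynomial (Fin 2) K)) :
    Dd (p * q) = Dd p * q + p * Dd q := by
  simp [Dd, th_thInv]

lemma Dd_X_pow (k : ℕ) : Dd (Polynomial.X ^ k : Polynomial (MvPolynomial (Fin 2) K)) = 0 := by
  rw [Dd, map_pow, thInv_X, ← Polynomial.C_pow, Polynomial.derivative_C, map_zero]

lemma Bd_one_C (c : MvPolynomial (Fin 2) K) : Polynomial.C c ∈ Bd (MvPolynomial (Fin 2) K) 0 := by
  rw [mem_Bd]
  intro k hk
  rw [Polynomial.coeff_C, if_neg (by omega)]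

lemma Dd_C (c : MvPolynomial (Fin 2) K) : Dd (Polynomial.C c) ∈ Bd (MvPolynomial (Fin 2) K) 1 := by
  induction c using MvPolynomial.induction_on with
  | C c => simp [Dd, thInv_CC]
  | add p q hp hq =>
    rw [Polynomial.C_add, Dd_add]
    exact Submodule.add_mem _ hp hq
  | mul_X p i hp =>
    rw [Polynomial.C_mul, Dd_mul]
    refine Submodule.add_mem _ (Bd_mul hp (Bd_one_C _) (by ring))
      (Bd_mul (Bd_one_C _) ?_ (by ring : (0 : ℤ) + 1 = 1))
    fin_cases i
    · have : Dd (Polynomial.C (X 0 : MvPolynomial (Fin 2) K)) = 1 := by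
        simp [Dd, thInv_C]
      exact this ▸ Bd_mono (by norm_num) (Bd_one_C 1)
    · have : Dd (Polynomial.C (X 1 : MvPolynomial (Fin 2) K)) = - Polynomial.X := by
        simp [Dd, thInv_C, th_C]
      exact this ▸ Submodule.neg_mem _ Bd_X

lemma Dd_mem {e : ℤ} {p : Polynomial (MvPolynomial (Fin 2) K)}
    (hp : p ∈ Bd (MvPolynomial (Fin 2) K) e) : Dd p ∈ Bd (MvPolynomial (Fin 2) K) (e + 1) := by
  rw [mem_Bd] at hp
  have hs : p = ∑ k ∈ p.support, Polynomial.C (p.coeff k) * Polynomial.X ^ k :=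
    p.as_sum_support_C_mul_X_pow
  have : ∀ s : Finset ℕ, (∀ k ∈ s, (k : ℤ) ≤ e) →
      Dd (∑ k ∈ s, Polynomial.C (p.coeff k) * Polynomial.X ^ k) ∈
        Bd (MvPolynomial (Fin 2) K) (e + 1) := by
    intro s
    induction s using Finset.induction_on with
    | empty => intro _; simp [Dd]
    | insert k s hk ih =>
      intro h
      rw [Finset.sum_insert hk, Dd_add]
      refine Submodule.add_mem _ ?_ (ih fun l hl => h l (Finset.mem_insert_of_mem hl))
      rw [Dd_mul, Dd_X_pow, mul_zero, add_zero]
      have h1 := h k (Finset.mem_insert_self _ _)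
      exact Bd_mono (by omega) (Bd_mul (Dd_C _) (Bd_pow Bd_X k) rfl)
  rw [hs]
  refine this _ fun k hk => ?_
  by_contra h
  exact Polynomial.mem_support_iff.1 hk (hp k (by omega))

lemma Bd_of_mul {A : Type*} [CommRing A] [IsDomain A] {e : ℤ} {f p : Polynomial A} (hf : f ≠ 0)
    (h : f * p ∈ Bd A e) : p ∈ Bd A e := by
  by_cases hp : p = 0
  · rw [hp]; exact Submodule.zero_mem _
  rw [mem_Bd] at *
  intro k hk
  apply Polynomial.coeff_eq_zero_of_natDegree_lt
  by_contra hlt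
  have h1 := h (f * p).natDegree (by
    rw [Polynomial.natDegree_mul hf hp]; push_cast; omega)
  rw [Polynomial.coeff_natDegree, Polynomial.leadingCoeff_eq_zero] at h1
  exact mul_ne_zero hf hp h1

/-- degree bound from restriction to the generic line -/
lemma deg_bound {e : ℤ} {r : MvPolynomial (Fin 2) K}
    (h : th K (Polynomial.C r) ∈ Bd (MvPolynomial (Fin 2) K) e) :
    ∀ u, coeff u r ≠ 0 → (u 0 : ℤ) + u 1 ≤ e := by
  classical
  by_contra hcon
  push Not at hcon
  obtain ⟨u₀, hu₀, he⟩ := hcon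
  obtain ⟨u, hu, hmax⟩ := Finset.exists_max_image r.support (fun u => u 0 + u 1)
    ⟨u₀, mem_support_iff.2 hu₀⟩
  have hk : e < ((u 0 + u 1 : ℕ) : ℤ) := by
    have := hmax u₀ (mem_support_iff.2 hu₀)
    push_cast; omega
  have h1 := mem_Bd.1 h _ hk
  have hth : th K (Polynomial.C r) = ∑ v ∈ r.support, Polynomial.C (C (coeff v r)) *
      (Polynomial.X ^ v 0 * (Polynomial.C (X 0) * Polynomial.X + Polynomial.C (X 1)) ^ v 1) := by
    conv_lhs => rw [r.as_sum]
    rw [th_C, map_sum]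
    refine Finset.sum_congr rfl fun v _ => ?_
    rw [aeval_monomial, Finsupp.prod_fintype _ _ (by simp), Fin.prod_univ_two]
    rfl
  have hc : ∀ v ∈ r.support, (Polynomial.C (C (coeff v r) : MvPolynomial (Fin 2) K) *
      (Polynomial.X ^ v 0 * (Polynomial.C (X 0) * Polynomial.X + Polynomial.C (X 1)) ^ v 1)).coeff
        (u 0 + u 1) = if v 0 + v 1 = u 0 + u 1 then C (coeff v r) * X 0 ^ v 1 else 0 := by
    intro v hv
    have hv' := hmax v hv
    rw [Polynomial.coeff_C_mul, Polynomial.coeff_X_pow_mul', if_pos (by omega)]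
    split_ifs with hd
    · rw [show u 0 + u 1 - v 0 = v 1 by omega]
      congr 1
      have := Polynomial.coeff_pow_of_natDegree_le (p := Polynomial.C (X 0) * Polynomial.X +
        Polynomial.C (X 1 : MvPolynomial (Fin 2) K)) (n := 1) (m := v 1)
        Polynomial.natDegree_linear_le
      simpa using this
    · rw [mem_Bd.1 (Bd_pow (Bd_lin _ _) (v 1)) _ (by omega), mul_zero]
  rw [hth, Polynomial.finsetSum_coeff, Finset.sum_congr rfl hc] at h1
  have h2 := congrArg (coeff (Finsupp.single 0 (u 1))) h1
  rw [coeff_sum, coeff_zero, Finset.sum_eq_single u] at h2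
  · rw [if_pos rfl, X_pow_eq_monomial, C_mul_monomial, coeff_monomial, if_pos rfl, mul_one] at h2
    exact mem_support_iff.1 hu h2
  · intro v _ hv
    split_ifs with hd
    · rw [X_pow_eq_monomial, C_mul_monomial, coeff_monomial, if_neg]
      intro hs
      have h3 : v 1 = u 1 := by simpa using DFunLike.congr_fun hs 0
      apply hv
      ext i
      fin_cases i
      · show v 0 = u 0
        omega
      · exact h3
    · simp
  · intro hn
    exact absurd hu hn

end grauert

noncomputable section mainLemmas

lemma exists_prim {R : Type*} [CommRing R] [IsDomain R] [UniqueFactorizationMonoid R] {N : ℕ}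
    (V : Fin N → R) (hV : V ≠ 0) : ∃ (g : R) (W : Fin N → R), g ≠ 0 ∧ W ≠ 0 ∧
      (∀ i, V i = g * W i) ∧ ∀ q x : R, (∀ p, q ∣ W p * x) → q ∣ x := by
  classical
  let : StrongNormalizationMonoid R := UniqueFactorizationMonoid.strongNormalizationMonoid
  let : NormalizedGCDMonoid R := UniqueFactorizationMonoid.toNormalizedGCDMonoid R
  obtain ⟨i₀, hi₀⟩ := Function.ne_iff.1 hV
  obtain ⟨W, hW, hW1⟩ := Finset.univ.extract_gcd V ⟨i₀, Finset.mem_univ _⟩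
  refine ⟨Finset.univ.gcd V, W, ?_, ?_, fun i => hW i (Finset.mem_univ _), ?_⟩
  · intro h
    exact hi₀ (Finset.gcd_eq_zero_iff.1 h i₀ (Finset.mem_univ _))
  · intro h
    have h1 := hW i₀ (Finset.mem_univ _)
    rw [h, Pi.zero_apply, mul_zero] at h1
    exact hi₀ h1
  · intro q x h
    have h1 : q ∣ Finset.univ.gcd fun p => W p * x := Finset.dvd_gcd fun p _ => h p
    have h2 := h1.trans (Finset.gcd_mul_right' Finset.univ W x).dvd
    rwa [hW1, one_mul] at h2

variable {K : Type*} [Field K]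

lemma map_rho (pt : Fin 2 → K) (p : MvPolynomial (Fin 3) K) :
    Polynomial.map (eval pt) (rho K (X 0 : MvPolynomial (Fin 2) K) (X 1) p) =
      rho K (pt 0) (pt 1) p := by
  induction p using MvPolynomial.induction_on with
  | C c => simp [rho, algHom_C, Polynomial.algebraMap_apply]
  | add p q hp hq => rw [map_add, Polynomial.map_add, hp, hq, map_add]
  | mul_X p i hp =>
    rw [map_mul, Polynomial.map_mul, hp, map_mul]
    congr 1
    fin_cases i <;> simp [rho]

variable {n : ℕ} {a : Fin (n + 2) → ℤ} {b : Fin n → ℤ}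
  {Φ : Matrix (Fin n) (Fin (n + 2)) (MvPolynomial (Fin 3) K)}

/-- restriction of the matrix to the line `z = s x + t y` -/
abbrev PhiL (Φ : Matrix (Fin n) (Fin (n + 2)) (MvPolynomial (Fin 3) K)) {A : Type*} [CommRing A]
    [Algebra K A] (s t : A) : Matrix (Fin n) (Fin (n + 2)) (Polynomial A) :=
  Φ.map (rho K s t)

lemma PhiL_mem {A : Type*} [CommRing A] [Algebra K A] (s t : A)
    (hΦ : ∀ j i, homog (Φ j i) (a i - b j)) (j : Fin n) (i : Fin (n + 2)) :
    PhiL Φ s t j i ∈ Bd A (a i - b j) := rho_mem s t (hΦ j i)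

lemma map_mulVec' {R S : Type*} [CommRing R] [CommRing S] (f : R →+* S) {N : ℕ}
    (M : Matrix (Fin n) (Fin N) R) (v : Fin N → R) (j : Fin n) :
    f (M.mulVec v j) = (M.map f).mulVec (fun i => f (v i)) j := RingHom.map_mulVec f M v j

lemma PhiL_mulVec {A : Type*} [CommRing A] [Algebra K A] (s t : A)
    (f : Fin (n + 2) → MvPolynomial (Fin 3) K) :
    (PhiL Φ s t).mulVec (fun i => rho K s t (f i)) = fun j => rho K s t (Φ.mulVec f j) := by
  funext j
  exact (map_mulVec' (rho K s t : MvPolynomial (Fin 3) K →+* Polynomial A) Φ f j).symm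

lemma PhiL_surj (hfin : FiniteColength n a b Φ) (s t : K) :
    ∃ D, ∀ d, D ≤ d → SurjAt a b (PhiL Φ s t) d := by
  obtain ⟨D, hD⟩ := hfin
  refine ⟨D, fun d hd g hg => ?_⟩
  choose G hG hGg using fun j => rho_surj s t (hg j)
  obtain ⟨f, hf, hfG⟩ := hD d hd (mem_degPiece.2 hG)
  have hf' := mem_degPiece.1 hf
  refine ⟨fun i => rho K s t (f i), fun i => rho_mem s t (hf' i), ?_⟩
  rw [PhiL_mulVec]
  funext j
  rw [← hGg j, ← hfG]
  rfl

lemma PhiL_spec (pt : Fin 2 → K) :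
    (PhiL Φ (X 0 : MvPolynomial (Fin 2) K) (X 1)).map (Polynomial.map (eval pt)) =
      PhiL Φ (pt 0) (pt 1) := by
  ext1 j i
  exact map_rho pt _

lemma spec_mem {pt : Fin 2 → K} {d : ℤ} {v : Fin (n + 2) → Polynomial (MvPolynomial (Fin 2) K)}
    (hv : ∀ i, v i ∈ Bd _ (d - a i))
    (h0 : (PhiL Φ (X 0 : MvPolynomial (Fin 2) K) (X 1)).mulVec v = 0) :
    (fun i => Polynomial.map (eval pt) (v i)) ∈ Npr a (PhiL Φ (pt 0) (pt 1)) d := by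
  rw [mem_Npr]
  refine ⟨fun i => ?_, ?_⟩
  · rw [mem_Bd]
    intro k hk
    rw [Polynomial.coeff_map, mem_Bd.1 (hv i) k hk, map_zero]
  · funext j
    have := map_mulVec' (Polynomial.mapRingHom (eval pt))
      (PhiL Φ (X 0 : MvPolynomial (Fin 2) K) (X 1)) v j
    rw [h0] at this
    rw [← PhiL_spec pt]
    simpa using this.symm

lemma poly_ext [Infinite K] {p q : Polynomial (MvPolynomial (Fin 2) K)}
    (h : ∀ pt : Fin 2 → K, Polynomial.map (eval pt) p = Polynomial.map (eval pt) q) : p = q := by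
  ext1 k
  refine MvPolynomial.funext fun pt => ?_
  rw [← Polynomial.coeff_map, ← Polynomial.coeff_map, h]

lemma th_kernel {W : Fin (n + 2) → Polynomial (MvPolynomial (Fin 2) K)} :
    (PhiL Φ (X 0 : MvPolynomial (Fin 2) K) (X 1)).mulVec (fun i => th K (W i)) = 0 ↔
      (Φ.map fun p => Polynomial.C (eta K p)).mulVec W = 0 := by
  have h1 : (PhiL Φ (X 0 : MvPolynomial (Fin 2) K) (X 1)) =
      (Φ.map fun p => Polynomial.C (eta K p)).map (th K) := by
    ext1 j i
    exact rho_eq_th _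
  have hinj : Function.Injective (th K) := Function.LeftInverse.injective thInv_th
  rw [h1]
  constructor
  · intro h
    funext j
    apply hinj
    rw [map_mulVec', h]; simp
  · intro h
    funext j
    rw [← map_mulVec', h]; simp

lemma no_generic [CharZero K] (hΦ : ∀ j i, homog (Φ j i) (a i - b j))
    (hfin : FiniteColength n a b Φ)
    {m : ℤ} (hm : (∑ i, a i) - (∑ j, b j) = 2 * m + 1)
    (hstable : Nd n a Φ m = ⊥)
    {v : Fin (n + 2) → Polynomial (MvPolynomial (Fin 2) K)} (hv0 : v ≠ 0)
    (hv : ∀ i, v i ∈ Bd _ (m - 1 - a i))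
    (hk : (PhiL Φ (X 0 : MvPolynomial (Fin 2) K) (X 1)).mulVec v = 0) : False := by
  obtain ⟨g, W, hg, hW0, hgW, hW⟩ := exists_prim (fun i => thInv K (v i)) (by
    intro h
    apply hv0
    funext i
    rw [← th_thInv (v i)]
    have : thInv K (v i) = 0 := congrFun h i
    rw [this]; simp)
  have hvW : ∀ i, v i = th K g * th K (W i) := fun i => by
    rw [← map_mul, ← hgW, th_thInv]
  have hthg : th K g ≠ 0 := fun h => hg (by rw [← thInv_th g, h, map_zero])
  have hWB : ∀ i, th K (W i) ∈ Bd _ (m - 1 - a i) := fun i =>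
    Bd_of_mul hthg (by rw [← hvW]; exact hv i)
  have hWk : (PhiL Φ (X 0 : MvPolynomial (Fin 2) K) (X 1)).mulVec (fun i => th K (W i)) = 0 := by
    have h1 : v = th K g • fun i => th K (W i) := by
      funext i
      exact hvW i
    rw [h1, Matrix.mulVec_smul] at hk
    exact (smul_eq_zero.1 hk).resolve_left hthg
  have hWk' := th_kernel.1 hWk
  have hDk : (Φ.map fun p => Polynomial.C (eta K p)).mulVec
      (fun i => Polynomial.derivative (W i)) = 0 := by
    funext j
    have h1 := congrArg Polynomial.derivative (congrFun hWk' j)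
    simpa [Matrix.mulVec, dotProduct] using h1
  have hDk' := th_kernel.2 hDk
  have hDB : ∀ i, th K (Polynomial.derivative (W i)) ∈ Bd _ (m - a i) := fun i => by
    have h1 := Dd_mem (hWB i)
    rw [Dd, thInv_th] at h1
    exact Bd_mono (by omega) h1
  have hwedge : ∀ p q, W p * Polynomial.derivative (W q) = W q * Polynomial.derivative (W p) := by
    intro p q
    apply Function.LeftInverse.injective (thInv_th (K := K))
    rw [map_mul, map_mul]
    refine poly_ext fun pt => ?_
    rw [Polynomial.map_mul, Polynomial.map_mul]
    exact wedge_zero (PhiL_mem _ _ hΦ) hm (PhiL_surj hfin _ _) (spec_mem (pt := pt) hWB hWk)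
      (spec_mem (pt := pt) hDB hDk') p q
  have hder : ∀ q, Polynomial.derivative (W q) = 0 := by
    intro q
    have h1 : W q ∣ Polynomial.derivative (W q) := hW _ _ fun p => ⟨_, hwedge p q⟩
    by_cases h0 : W q = 0
    · rw [h0]; simp
    · exact Polynomial.eq_zero_of_dvd_of_degree_lt h1 (Polynomial.degree_derivative_lt h0)
  have hC : ∀ q, W q = Polynomial.C ((W q).coeff 0) := fun q =>
    Polynomial.eq_C_of_derivative_eq_zero (hder q)
  have hbd : ∀ q, ∃ p, homog p (m - 1 - a q) ∧ eta K p = (W q).coeff 0 := fun q =>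
    eta_surj (deg_bound (by rw [← hC q]; exact hWB q))
  choose P hP hPe using hbd
  have hker : Φ.mulVec P = 0 := by
    funext j
    refine eta_inj (d := m - 1 - b j) ?_ ?_
    · exact homog_sum _ _ _ fun i _ => homog_mul (hΦ j i) (hP i) (by ring)
    · have h1 := congrFun hWk' j
      have h2 : (Φ.map fun p => Polynomial.C (eta K p)).mulVec W j =
          Polynomial.C (eta K (Φ.mulVec P j)) := by
        simp only [Matrix.mulVec, dotProduct, map_sum, map_mul, Matrix.map_apply, hPe, ← hC]
      rw [h2] at h1
      exact Polynomial.C_eq_zero.1 h1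
  have hmem : (X 0 : MvPolynomial (Fin 3) K) • P ∈ Nd n a Φ m := by
    refine ⟨mem_degPiece.2 fun i => ?_, ?_⟩
    · exact homog_mul (isWeightedHomogeneous_X K (fun _ : Fin 3 => (1 : ℤ)) 0) (hP i) (by ring)
    · show Φ.mulVec _ = 0
      rw [Matrix.mulVec_smul, hker, smul_zero]
  rw [hstable, Submodule.mem_bot] at hmem
  have hP0 : P = 0 := (smul_eq_zero.1 hmem).resolve_left (X_ne_zero 0)
  apply hW0
  funext q
  rw [hC q, ← hPe q, hP0]
  simp

lemma homogenize (Q : MvPolynomial (Fin 2) K) : ∃ (P : MvPolynomial (Fin 3) K) (N : ℕ),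
    ∀ c : Fin 3 → K, c 2 ≠ 0 → eval c P = c 2 ^ N * eval ![-c 0 / c 2, -c 1 / c 2] Q := by
  induction Q using MvPolynomial.induction_on with
  | C r => exact ⟨C r, 0, fun c _ => by simp⟩
  | add p q hp hq =>
    obtain ⟨P, N, h⟩ := hp
    obtain ⟨P', N', h'⟩ := hq
    refine ⟨X 2 ^ N' * P + X 2 ^ N * P', N + N', fun c hc => ?_⟩
    simp only [map_add, map_mul, map_pow, eval_X, h c hc, h' c hc]
    ring
  | mul_X p i hp =>
    obtain ⟨P, N, h⟩ := hp
    fin_cases i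
    · refine ⟨P * (- X 0), N + 1, fun c hc => ?_⟩
      simp only [map_mul, map_neg, eval_X, h c hc]
      simp
      field_simp
      ring
    · refine ⟨P * (- X 1), N + 1, fun c hc => ?_⟩
      simp only [map_mul, map_neg, eval_X, h c hc]
      simp
      field_simp
      ring

lemma linform_eq {c : Fin 3 → K} (hc : c 2 ≠ 0) :
    linform c = C (c 2) * lineEq (-c 0 / c 2) (-c 1 / c 2) := by
  have h0 : C (c 2) * C (-c 0 / c 2) = - (C (c 0) : MvPolynomial (Fin 3) K) := by
    rw [← C_mul, mul_div_cancel₀ _ hc, C_neg]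
  have h1 : C (c 2) * C (-c 1 / c 2) = - (C (c 1) : MvPolynomial (Fin 3) K) := by
    rw [← C_mul, mul_div_cancel₀ _ hc, C_neg]
  rw [linform, Fin.sum_univ_three, lineEq]
  linear_combination X 0 * h0 + X 1 * h1

lemma rho_linform {c : Fin 3 → K} (hc : c 2 ≠ 0) :
    rho K (-c 0 / c 2) (-c 1 / c 2) (linform c) = 0 := by
  rw [linform_eq hc, map_mul]
  simp [lineEq, rho, algHom_C]

lemma linform_dvd [Infinite K] {c : Fin 3 → K} (hc : c 2 ≠ 0) {d : ℤ}
    {p : MvPolynomial (Fin 3) K} (hp : homog p d)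
    (h : rho K (-c 0 / c 2) (-c 1 / c 2) p = 0) :
    ∃ q, homog q (d - 1) ∧ p = linform c * q := by
  obtain ⟨q, hq, e⟩ := line_dvd _ _ hp h
  refine ⟨C (c 2)⁻¹ * q, homog_C_mul _ hq, ?_⟩
  have h1 : C (c 2) * C (c 2)⁻¹ = (1 : MvPolynomial (Fin 3) K) := by
    rw [← C_mul, mul_inv_cancel₀ hc, C_1]
  rw [linform_eq hc, e]
  linear_combination (- lineEq (-c 0 / c 2) (-c 1 / c 2) * q) * h1

lemma linform_ne {c : Fin 3 → K} (hc : c 2 ≠ 0) : linform c ≠ 0 := by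
  intro h
  have := congrArg (eval ![0, 0, 1]) h
  simp [linform, Fin.sum_univ_three] at this
  exact hc this

lemma inj_part [Infinite K] {c : Fin 3 → K} (hc : c 2 ≠ 0)
    {d m : ℤ} (hbot : Npr a (PhiL Φ (-c 0 / c 2) (-c 1 / c 2)) (m - 1) = ⊥) (hd : d ≤ m - 1) :
    Function.Injective (mulLmap n a b Φ (linform c) (homog_linform c) d) := by
  rw [← LinearMap.ker_eq_bot, LinearMap.ker_eq_bot']
  intro x hx
  obtain ⟨⟨w, hw⟩, rfl⟩ := Submodule.Quotient.mk_surjective _ x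
  rw [mulLmap, Submodule.mapQ_apply, Submodule.Quotient.mk_eq_zero] at hx
  obtain ⟨f, hf, hfw⟩ := hx
  have hfw' : Φ.mulVec f = linform c • w := hfw
  have hf' := mem_degPiece.1 hf
  have hN : (fun i => rho K (-c 0 / c 2) (-c 1 / c 2) (f i)) ∈
      Npr a (PhiL Φ (-c 0 / c 2) (-c 1 / c 2)) (m - 1) := by
    refine Npr_mono hd (mem_Npr.2 ⟨fun i => rho_mem _ _ (hf' i), ?_⟩)
    rw [PhiL_mulVec]
    funext j
    rw [hfw', Pi.smul_apply, smul_eq_mul, map_mul, rho_linform hc, zero_mul, Pi.zero_apply]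
  rw [hbot, Submodule.mem_bot] at hN
  choose f' hf'h hf'e using fun i => linform_dvd hc (hf' i) (congrFun hN i)
  rw [Submodule.Quotient.mk_eq_zero]
  refine ⟨f', mem_degPiece.2 fun i => ?_, ?_⟩
  · have := hf'h i
    rwa [show d - a i - 1 = d - 1 - a i by ring] at this
  · show Φ.mulVec f' = w
    have h1 : f = linform c • f' := funext hf'e
    rw [h1, Matrix.mulVec_smul] at hfw'
    exact smul_right_injective _ (linform_ne hc) hfw'

lemma surj_part [Infinite K] (hΦ : ∀ j i, homog (Φ j i) (a i - b j)) {c : Fin 3 → K}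
    (hc : c 2 ≠ 0) {d : ℤ} (hs : SurjAt a b (PhiL Φ (-c 0 / c 2) (-c 1 / c 2)) d) :
    Function.Surjective (mulLmap n a b Φ (linform c) (homog_linform c) d) := by
  intro y
  obtain ⟨⟨g, hg⟩, rfl⟩ := Submodule.Quotient.mk_surjective _ y
  have hg' := mem_degPiece.1 hg
  obtain ⟨f₀, hf₀, he⟩ := hs (fun j => rho K (-c 0 / c 2) (-c 1 / c 2) (g j))
    fun j => rho_mem _ _ (hg' j)
  choose f hf hff using fun i => rho_surj (-c 0 / c 2) (-c 1 / c 2) (hf₀ i)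
  have hh : ∀ j, homog (g j - Φ.mulVec f j) (d - b j) := fun j =>
    (hg' j).sub (homog_sum _ _ _ fun i _ => homog_mul (hΦ j i) (hf i) (by ring))
  have hz : ∀ j, rho K (-c 0 / c 2) (-c 1 / c 2) (g j - Φ.mulVec f j) = 0 := by
    intro j
    have h1 := congrFun (PhiL_mulVec (Φ := Φ) (-c 0 / c 2) (-c 1 / c 2) f) j
    simp only [hff] at h1
    rw [map_sub, ← h1, he, sub_self]
  choose w hw hwe using fun j => linform_dvd hc (hh j) (hz j)
  have hwm : w ∈ degPiece (K := K) n b (d - 1) := mem_degPiece.2 fun j => by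
    have := hw j
    rwa [show d - b j - 1 = d - 1 - b j by ring] at this
  refine ⟨Submodule.Quotient.mk ⟨w, hwm⟩, ?_⟩
  rw [mulLmap, Submodule.mapQ_apply, Submodule.Quotient.eq]
  refine ⟨-f, mem_degPiece.2 fun i => (hf i).neg, ?_⟩
  show Φ.mulVec (-f) = linform c • w - g
  rw [Matrix.mulVec_neg]
  funext j
  have := hwe j
  simp only [Pi.neg_apply, Pi.sub_apply, Pi.smul_apply, smul_eq_mul]
  rw [← this]
  ring

end mainLemmas

/-- If `a - b` is odd (`a - b = 2m + 1`) and `N_m = 0` (the associated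
normalized rank-2 bundle is stable with `c₁ = -1`), then for a general linear form `L` the
multiplication map `×L : M_{d-1} → M_d` is injective for all `d ≤ m - 1` and surjective for
all `d ≥ m`. -/
theorem statement2 {K : Type*} [Field K] [IsAlgClosed K] [CharZero K]
    (n : ℕ) (a : Fin (n + 2) → ℤ) (b : Fin n → ℤ)
    (Φ : Matrix (Fin n) (Fin (n + 2)) (MvPolynomial (Fin 3) K))
    (hΦ : ∀ j i, homog (Φ j i) (a i - b j))
    (hfin : FiniteColength n a b Φ)
    (m : ℤ) (hm : (∑ i, a i) - (∑ j, b j) = 2 * m + 1)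
    (hstable : Nd n a Φ m = ⊥) :
    ∃ P : MvPolynomial (Fin 3) K, P ≠ 0 ∧ ∀ c : Fin 3 → K, eval c P ≠ 0 →
      (∀ d : ℤ, d ≤ m - 1 →
        Function.Injective (mulLmap n a b Φ (linform c) (homog_linform c) d)) ∧
      (∀ d : ℤ, m ≤ d →
        Function.Surjective (mulLmap n a b Φ (linform c) (homog_linform c) d)) := by
  rcases gen_dich (fun i => m - 1 - a i) (PhiL Φ (X 0 : MvPolynomial (Fin 2) K) (X 1)) with
    ⟨v, hv0, hv, hk⟩ | ⟨Q, hQ, hgen⟩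
  · exact (no_generic hΦ hfin hm hstable hv0 hv hk).elim
  obtain ⟨P, N, hP⟩ := homogenize Q
  refine ⟨P * X 2, ?_, fun c hc => ?_⟩
  · refine mul_ne_zero ?_ (X_ne_zero 2)
    intro h0
    apply hQ
    refine MvPolynomial.funext fun pt => ?_
    have h1 := hP ![-pt 0, -pt 1, 1] (by simp)
    rw [h0] at h1
    have h2 : (![pt 0, pt 1] : Fin 2 → K) = pt := by
      funext i
      fin_cases i <;> rfl
    simpa [h2] using h1.symm
  · rw [map_mul, eval_X] at hc
    have hc2 : c 2 ≠ 0 := right_ne_zero_of_mul hc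
    have hcP : eval c P ≠ 0 := left_ne_zero_of_mul hc
    rw [hP c hc2] at hcP
    have hbot : Npr a (PhiL Φ (-c 0 / c 2) (-c 1 / c 2)) (m - 1) = ⊥ := by
      rw [eq_bot_iff]
      intro w hw
      rw [mem_Npr] at hw
      refine hgen _ (right_ne_zero_of_mul hcP) w hw.1 ?_
      rw [PhiL_spec]
      exact hw.2
    exact ⟨fun d hd => inj_part hc2 hbot hd, fun d hd => surj_part hΦ hc2
      (surj_of_bot (PhiL_mem _ _ hΦ) hm (PhiL_surj hfin _ _) hbot d hd)⟩
end

section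
/- Assume a−b is even and N_{m−1} ≠ 0 (i.e. the associated normalized rank-2 bundle with c_1 = 0 is unstable), and let k = max{ j ∈ ℤ : N_{m−j} ≠ 0 } be the index of instability (necessarily k > 0). Then for a general linear form L ∈ R_1, the multiplication map ×L : M_{d−1} → M_d is injective for all d ≤ m+k−1 and surjective for all d ≥ m−k−1. -/
open MvPolynomial

/-! ### Part 1: bordered determinants and the Buchsbaum-Rim type argument -/

section Bordered

set_option linter.unusedSectionVars false

open Matrix

variable {R : Type*} [CommRing R] {n : ℕ}

/-- The square matrix obtained from the rows of `Φ` followed by the rows `f`, `g`. -/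
def bord (Φ : Matrix (Fin n) (Fin (n + 2)) R) (f g : Fin (n + 2) → R) :
    Matrix (Fin n ⊕ Fin 2) (Fin n ⊕ Fin 2) R :=
  (Matrix.fromRows Φ (Matrix.of ![f, g])).submatrix id finSumFinEquiv

def dl (Φ : Matrix (Fin n) (Fin (n + 2)) R) (f g : Fin (n + 2) → R) : R := (bord Φ f g).det

/-- signed maximal minors -/
def Am (Φ : Matrix (Fin n) (Fin (n + 2)) R) (i j : Fin (n + 2)) : R :=
  dl Φ (Pi.single i 1) (Pi.single j 1)

lemma bord_update (Φ : Matrix (Fin n) (Fin (n + 2)) R) (f g : Fin (n + 2) → R) :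
    bord Φ f g = (bord Φ f 0).updateRow (Sum.inr 1) (g ∘ finSumFinEquiv) := by
  ext p q
  rcases p with p | p
  · simp [bord, Matrix.updateRow_apply]
  · fin_cases p <;> simp [bord, Matrix.updateRow_apply]

lemma dl_add (Φ : Matrix (Fin n) (Fin (n + 2)) R) (f g h : Fin (n + 2) → R) :
    dl Φ f (g + h) = dl Φ f g + dl Φ f h := by
  unfold dl
  rw [bord_update Φ f (g + h), bord_update Φ f g, bord_update Φ f h, ← Matrix.det_updateRow_add]
  rfl

lemma dl_smul (Φ : Matrix (Fin n) (Fin (n + 2)) R) (f g : Fin (n + 2) → R) (c : R) :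
    dl Φ f (c • g) = c * dl Φ f g := by
  unfold dl
  rw [bord_update Φ f (c • g), bord_update Φ f g, ← Matrix.det_updateRow_smul]
  rfl

def dlLin (Φ : Matrix (Fin n) (Fin (n + 2)) R) (f : Fin (n + 2) → R) :
    (Fin (n + 2) → R) →ₗ[R] R where
  toFun g := dl Φ f g
  map_add' := dl_add Φ f
  map_smul' c g := dl_smul Φ f g c

lemma dl_eq (Φ : Matrix (Fin n) (Fin (n + 2)) R) (f g : Fin (n + 2) → R) :
    dl Φ f g = (fun j => dl Φ f (Pi.single j 1)) ⬝ᵥ g := by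
  have := LinearMap.pi_apply_eq_sum_univ (dlLin Φ f) g
  simp only [dlLin, LinearMap.coe_mk, AddHom.coe_mk, smul_eq_mul] at this
  rw [this, dotProduct]
  refine Finset.sum_congr rfl fun j _ => ?_
  rw [mul_comm]
  congr 2
  ext i
  simp [Pi.single_apply, eq_comm]

lemma dl_row (Φ : Matrix (Fin n) (Fin (n + 2)) R) (f : Fin (n + 2) → R) (l : Fin n) :
    dl Φ f (Φ l) = 0 := by
  refine Matrix.det_zero_of_row_eq (i := Sum.inl l) (j := Sum.inr 1) (by simp) ?_
  ext q
  simp [bord]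

lemma dl_self (Φ : Matrix (Fin n) (Fin (n + 2)) R) (f : Fin (n + 2) → R) :
    dl Φ f f = 0 := by
  refine Matrix.det_zero_of_row_eq (i := Sum.inr 0) (j := Sum.inr 1) (by simp) ?_
  ext q
  simp [bord]

lemma Am_self (Φ : Matrix (Fin n) (Fin (n + 2)) R) (i) : Am Φ i i = 0 := dl_self _ _

lemma Am_swap (Φ : Matrix (Fin n) (Fin (n + 2)) R) (i j) : Am Φ i j = - Am Φ j i := by
  have h := Matrix.det_permute (Equiv.swap (Sum.inr 0) (Sum.inr 1))
    (bord Φ (Pi.single j 1) (Pi.single i 1))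
  rw [Equiv.Perm.sign_swap (by simp)] at h
  have e : (bord Φ (Pi.single j 1) (Pi.single i 1)).submatrix
      (Equiv.swap (Sum.inr 0) (Sum.inr 1)) id = bord Φ (Pi.single i 1) (Pi.single j 1) := by
    ext p q
    rcases p with p | p
    · rw [Matrix.submatrix_apply, Equiv.swap_apply_of_ne_of_ne (by simp) (by simp)]
      simp [bord]
    · fin_cases p <;> simp [bord]
  rw [e] at h
  simpa [Am, dl] using h

lemma mulVec_Am (Φ : Matrix (Fin n) (Fin (n + 2)) R) (i) : Φ *ᵥ (Am Φ i) = 0 := by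
  ext l
  have := dl_eq Φ (Pi.single i 1) (Φ l)
  rw [dl_row] at this
  rw [Matrix.mulVec, dotProduct_comm]
  exact this.symm

lemma bord_mul (Φ : Matrix (Fin n) (Fin (n + 2)) R) (f g : Fin (n + 2) → R)
    (S : Matrix (Fin (n + 2)) (Fin n) R) (s v : Fin (n + 2) → R) :
    bord Φ f g * (bord Sᵀ s v)ᵀ = Matrix.fromBlocks (Φ * S) (Φ * (Matrix.of ![s, v])ᵀ)
      ((Matrix.of ![f, g]) * S) ((Matrix.of ![f, g]) * (Matrix.of ![s, v])ᵀ) := by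
  unfold bord
  rw [Matrix.transpose_submatrix, Matrix.submatrix_mul_equiv, Matrix.transpose_fromRows,
    Matrix.fromRows_mul_fromCols]
  simp

lemma dl_mul_dl (Φ : Matrix (Fin n) (Fin (n + 2)) R) (f g : Fin (n + 2) → R)
    (S : Matrix (Fin (n + 2)) (Fin n) R) (s v : Fin (n + 2) → R) (x : R)
    (hS : Φ * S = x • 1) (hs : Φ *ᵥ s = 0) (hv : Φ *ᵥ v = 0) :
    dl Φ f g * dl Sᵀ s v = x ^ n * ((f ⬝ᵥ s) * (g ⬝ᵥ v) - (f ⬝ᵥ v) * (g ⬝ᵥ s)) := by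
  have h0 : Φ * (Matrix.of ![s, v])ᵀ = 0 := by
    ext l q
    fin_cases q
    · simpa [Matrix.mul_apply, Matrix.mulVec, dotProduct] using congrFun hs l
    · simpa [Matrix.mul_apply, Matrix.mulVec, dotProduct] using congrFun hv l
  unfold dl
  rw [← Matrix.det_transpose (bord Sᵀ s v), ← Matrix.det_mul, bord_mul, h0,
    Matrix.det_fromBlocks_zero₁₂, hS, Matrix.det_smul, Matrix.det_fin_two]
  simp [Matrix.mul_apply, dotProduct]

lemma Am_mul_dl (Φ : Matrix (Fin n) (Fin (n + 2)) R) (i j)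
    (S : Matrix (Fin (n + 2)) (Fin n) R) (s v : Fin (n + 2) → R) (x : R)
    (hS : Φ * S = x • 1) (hs : Φ *ᵥ s = 0) (hv : Φ *ᵥ v = 0) :
    Am Φ i j * dl Sᵀ s v = x ^ n * (s i * v j - v i * s j) := by
  rw [Am, dl_mul_dl Φ _ _ S s v x hS hs hv]
  simp

lemma Am_map {R' : Type*} [CommRing R'] (F : R →+* R') (Φ : Matrix (Fin n) (Fin (n + 2)) R) (i j) :
    Am (Φ.map F) i j = F (Am Φ i j) := by
  unfold Am dl
  rw [RingHom.map_det]
  congr 1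
  ext p q
  rcases p with p | p
  · simp [bord]
  · fin_cases p <;> simp [bord, Pi.single_apply, apply_ite F]

variable [IsDomain R]

/-- vectors killed by `Φ` with vanishing `i0` coordinate are proportional to `Am Φ i0` -/
lemma Am_prop (Φ : Matrix (Fin n) (Fin (n + 2)) R) (i0) (v : Fin (n + 2) → R)
    (hv : Φ *ᵥ v = 0) (h0 : v i0 = 0) (j l) : Am Φ i0 j * v l = Am Φ i0 l * v j := by
  by_cases hv0 : v = 0
  · simp [hv0]
  have h : dl Φ (Pi.single i0 1) (v j • Pi.single l 1 + (-v l) • Pi.single j 1) = 0 := by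
    unfold dl
    rw [← Matrix.exists_mulVec_eq_zero_iff]
    refine ⟨v ∘ finSumFinEquiv, ?_, ?_⟩
    · intro h
      apply hv0
      ext q
      have := congrFun h (finSumFinEquiv.symm q)
      simpa using this
    · unfold bord
      rw [Matrix.submatrix_mulVec_equiv]
      have : (v ∘ finSumFinEquiv) ∘ finSumFinEquiv.symm = v := by ext q; simp
      rw [this, Matrix.fromRows_mulVec, hv]
      ext p
      rcases p with p | p
      · simp
      · fin_cases p
        · simp [h0]
        · simp [add_dotProduct]; ring
  rw [dl_add, dl_smul, dl_smul] at h
  change v j * Am Φ i0 l + -v l * Am Φ i0 j = 0 at h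
  linear_combination -h

/-- Cramer: the `Am Φ i0 j` annihilate the cokernel of `Φ` without column `i0`. -/
lemma Am_cramer (Φ : Matrix (Fin n) (Fin (n + 2)) R) (i0 j) (g : Fin n → R) :
    ∃ f : Fin (n + 2) → R, f i0 = 0 ∧ Φ *ᵥ f = Am Φ i0 j • g := by
  set W := bord Φ (Pi.single i0 1) (Pi.single j 1) with hW
  have h : W *ᵥ (W.adjugate *ᵥ (Sum.elim g 0)) = W.det • (Sum.elim g 0) := by
    rw [Matrix.mulVec_mulVec, Matrix.mul_adjugate, Matrix.smul_mulVec, Matrix.one_mulVec]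
  set f := (W.adjugate *ᵥ (Sum.elim g 0)) ∘ finSumFinEquiv.symm with hf
  have h2 : W *ᵥ (W.adjugate *ᵥ (Sum.elim g 0)) =
      Matrix.fromRows Φ (Matrix.of ![Pi.single i0 1, Pi.single j 1]) *ᵥ f := by
    rw [hf]
    conv_lhs => rw [hW, bord, Matrix.submatrix_mulVec_equiv]
    rfl
  rw [h2, Matrix.fromRows_mulVec] at h
  refine ⟨f, ?_, ?_⟩
  · have := congrFun h (Sum.inr 0)
    simpa [Matrix.mulVec] using this
  · ext l
    have := congrFun h (Sum.inl l)
    have hd : W.det = Am Φ i0 j := rfl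
    simpa [hd] using this

end Bordered

section Field
open Matrix
variable {F : Type*} [Field F] {n : ℕ}

lemma exists_single_notMem (p : Submodule F (Fin n → F)) (hp : p ≠ ⊤) :
    ∃ i, (Pi.single i 1 : Fin n → F) ∉ p := by
  by_contra! h
  apply hp
  rw [eq_top_iff, ← (Pi.basisFun F (Fin n)).span_eq, Submodule.span_le]
  rintro _ ⟨i, rfl⟩
  simpa using h i

lemma exists_Am_ne_zero_field (Φ : Matrix (Fin n) (Fin (n + 2)) F)
    (S : Matrix (Fin (n + 2)) (Fin n) F) (x : F) (hx : x ≠ 0) (hS : Φ * S = x • 1) :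
    ∃ i j, Am Φ i j ≠ 0 := by
  have h1 : LinearIndependent F (fun l => Φ l) := by
    rw [Fintype.linearIndependent_iff]
    intro c hc l
    have h2 : c ᵥ* Φ = 0 := by
      ext q
      have := congrFun hc q
      simpa [Matrix.vecMul, dotProduct] using this
    have h3 : c ᵥ* (Φ * S) = 0 := by rw [← Matrix.vecMul_vecMul, h2, Matrix.zero_vecMul]
    rw [hS, Matrix.vecMul_smul, Matrix.vecMul_one] at h3
    simpa [hx] using congrFun h3 l
  have ext1 : ∀ {m : ℕ} (w : Fin m → (Fin (n + 2) → F)), LinearIndependent F w → m < n + 2 →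
      ∃ i, LinearIndependent F (Fin.snoc w (Pi.single i 1) : Fin (m + 1) → (Fin (n + 2) → F)) := by
    intro m w hw hm
    obtain ⟨i, hi⟩ := exists_single_notMem (Submodule.span F (Set.range w)) (by
      intro htop
      have := finrank_span_eq_card hw
      rw [htop] at this
      simp at this
      omega)
    exact ⟨i, linearIndependent_finSnoc.2 ⟨hw, hi⟩⟩
  obtain ⟨i, hi⟩ := ext1 _ h1 (by omega)
  obtain ⟨j, hj⟩ := ext1 _ hi (by omega)
  refine ⟨i, j, ?_⟩
  have h4 : LinearIndependent F (bord Φ (Pi.single i 1) (Pi.single j 1)).row := by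
    have e1 : LinearIndependent F (fun p => (Matrix.fromRows Φ
        (Matrix.of ![Pi.single i 1, Pi.single j 1])) p) := by
      rw [← linearIndependent_equiv (finSumFinEquiv (m := n) (n := 2)).symm]
      convert hj using 1
      ext p q
      refine Fin.lastCases ?_ (fun p => ?_) p
      · have : (finSumFinEquiv (m := n) (n := 2)).symm (Fin.last (n + 1)) = (Sum.inr 1 : Fin n ⊕ Fin 2) := by
          rw [Equiv.symm_apply_eq]; ext; simp
        simp [this]
      · refine Fin.lastCases ?_ (fun p => ?_) p
        · have : (finSumFinEquiv (m := n) (n := 2)).symm ((Fin.last n).castSucc) = (Sum.inr 0 : Fin n ⊕ Fin 2) := by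
            rw [Equiv.symm_apply_eq]; ext; simp
          simp [this]
        · have : (finSumFinEquiv (m := n) (n := 2)).symm (p.castSucc.castSucc) = (Sum.inl p : Fin n ⊕ Fin 2) := by
            rw [Equiv.symm_apply_eq]; ext; simp
          simp [this]
    have e2 := e1.map' (LinearMap.funLeft F F (finSumFinEquiv (m := n) (n := 2)))
      (LinearMap.ker_eq_bot.2 (LinearMap.funLeft_injective_of_surjective _ _ _
        (Equiv.surjective _)))
    exact e2
  rw [Matrix.linearIndependent_rows_iff_isUnit, Matrix.isUnit_iff_isUnit_det] at h4
  exact h4.ne_zero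

end Field

section BR

set_option linter.unusedSectionVars false
open Matrix
variable {R : Type*} [CommRing R] [IsDomain R] {n : ℕ}

lemma exists_Am_ne_zero (Φ : Matrix (Fin n) (Fin (n + 2)) R)
    (S : Matrix (Fin (n + 2)) (Fin n) R) (x : R) (hx : x ≠ 0) (hS : Φ * S = x • 1) :
    ∃ i j, Am Φ i j ≠ 0 := by
  let ι := algebraMap R (FractionRing R)
  obtain ⟨i, j, h⟩ := exists_Am_ne_zero_field (Φ.map ι) (S.map ι) (ι x)
    (by simpa [ι] using hx) (by
      rw [← Matrix.map_mul, hS]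
      ext p q
      simp [Matrix.one_apply, apply_ite ι])
  refine ⟨i, j, fun h0 => h ?_⟩
  rw [Am_map, h0, map_zero]

lemma vecMul_inj (Φ : Matrix (Fin n) (Fin (n + 2)) R)
    (S : Matrix (Fin (n + 2)) (Fin n) R) (x : R) (hx : x ≠ 0) (hS : Φ * S = x • 1)
    (w : Fin n → R) (hw : w ᵥ* Φ = 0) : w = 0 := by
  have h3 : w ᵥ* (Φ * S) = 0 := by rw [← Matrix.vecMul_vecMul, hw, Matrix.zero_vecMul]
  rw [hS, Matrix.vecMul_smul, Matrix.vecMul_one] at h3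
  exact (smul_eq_zero.1 h3).resolve_left hx

lemma vec_dvd {ι : Type*} {x y : R} (h : ∀ p q, y * p = x * q → x ∣ p) {v w : ι → R}
    (hvw : y • v = x • w) : ∃ u, v = x • u := by
  have : ∀ i, x ∣ v i := fun i => h _ (w i) (by simpa using congrFun hvw i)
  choose u hu using this
  exact ⟨u, funext hu⟩

lemma factor_through (Φ : Matrix (Fin n) (Fin (n + 2)) R)
    (S T : Matrix (Fin (n + 2)) (Fin n) R) (x y : R) (hx : x ≠ 0)
    (hS : Φ * S = x • 1) (hT : Φ * T = y • 1) (hxy : ∀ p q, y * p = x * q → x ∣ p)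
    (κ : Fin (n + 2) → R) (hκ : ∀ v, Φ *ᵥ v = 0 → κ ⬝ᵥ v = 0) : ∃ μ : Fin n → R, κ = μ ᵥ* Φ := by
  have key : ∀ (S : Matrix (Fin (n + 2)) (Fin n) R) (x : R), Φ * S = x • 1 →
      x • κ = (κ ᵥ* S) ᵥ* Φ := by
    intro S x hS
    have h : ∀ f, (x • κ - (κ ᵥ* S) ᵥ* Φ) ⬝ᵥ f = 0 := by
      intro f
      have := hκ (x • f - S *ᵥ (Φ *ᵥ f)) (by
        rw [Matrix.mulVec_sub, Matrix.mulVec_mulVec, hS, Matrix.mulVec_smul, Matrix.smul_mulVec,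
          Matrix.one_mulVec, sub_self])
      rw [dotProduct_sub, dotProduct_smul, Matrix.dotProduct_mulVec, Matrix.dotProduct_mulVec] at this
      rw [sub_dotProduct, smul_dotProduct, this]
    exact sub_eq_zero.1 (dotProduct_eq_zero _ h)
  have h1 := key S x hS
  have h2 := key T y hT
  have h3 : y • (κ ᵥ* S) = x • (κ ᵥ* T) := by
    rw [← sub_eq_zero]
    apply vecMul_inj Φ S x hx hS
    rw [Matrix.sub_vecMul, Matrix.smul_vecMul, Matrix.smul_vecMul, ← h1, ← h2, smul_comm, sub_self]
  obtain ⟨μ, hμ⟩ := vec_dvd hxy h3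
  refine ⟨μ, ?_⟩
  rw [hμ, Matrix.smul_vecMul] at h1
  exact smul_right_injective _ hx h1

/-- Exactness of the Buchsbaum-Rim complex at `F`. -/
lemma buchsbaum_rim (Φ : Matrix (Fin n) (Fin (n + 2)) R)
    (S T U : Matrix (Fin (n + 2)) (Fin n) R) (x y z : R) (hx : x ≠ 0) (hy : y ≠ 0) (hz : z ≠ 0)
    (hS : Φ * S = x • 1) (hT : Φ * T = y • 1) (hU : Φ * U = z • 1)
    (hxy : ∀ p q, y * p = x * q → x ∣ p) (hyx : ∀ p q, z * p = y * q → y ∣ p)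
    (hzx : ∀ p q, x * p = z * q → z ∣ p)
    (hxyn : ∀ p q, y ^ n * p = x ^ n * q → x ^ n ∣ p)
    (hxyz : ∀ p q r, z ^ n * p + x ^ n * q + y ^ n * r = 0 → ∃ u w, p = x ^ n * u + y ^ n * w)
    (s : Fin (n + 2) → R) (hs : Φ *ᵥ s = 0) :
    ∃ c : Fin (n + 2) → R, ∀ i, s i = ∑ l, c l * Am Φ i l := by
  obtain ⟨i₀, j₀, hA⟩ := exists_Am_ne_zero Φ S x hx hS
  have lam : ∀ S : Matrix (Fin (n + 2)) (Fin n) R, ∃ c : Fin (n + 2) → R, ∀ v, dl Sᵀ s v = c ⬝ᵥ v :=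
    fun S => ⟨_, dl_eq _ _⟩
  obtain ⟨cx, hcx⟩ := lam S
  obtain ⟨cy, hcy⟩ := lam T
  obtain ⟨cz, hcz⟩ := lam U
  have kill : ∀ (S T : Matrix (Fin (n + 2)) (Fin n) R) (x y : R) (cx cy : Fin (n + 2) → R),
      Φ * S = x • 1 → Φ * T = y • 1 → (∀ v, dl Sᵀ s v = cx ⬝ᵥ v) → (∀ v, dl Tᵀ s v = cy ⬝ᵥ v) →
      ∀ v, Φ *ᵥ v = 0 → (y ^ n • cx - x ^ n • cy) ⬝ᵥ v = 0 := by
    intro S T x y cx cy hS hT hcx hcy v hv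
    have e1 := Am_mul_dl Φ i₀ j₀ S s v x hS hs hv
    have e2 := Am_mul_dl Φ i₀ j₀ T s v y hT hs hv
    rw [sub_dotProduct, smul_dotProduct, smul_dotProduct, ← hcx, ← hcy]
    apply mul_left_cancel₀ hA
    simp only [smul_eq_mul]
    linear_combination y ^ n * e1 - x ^ n * e2
  obtain ⟨μxy, hμxy⟩ := factor_through Φ S T x y hx hS hT hxy _ (kill S T x y cx cy hS hT hcx hcy)
  obtain ⟨μyz, hμyz⟩ := factor_through Φ T U y z hy hT hU hyx _ (kill T U y z cy cz hT hU hcy hcz)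
  obtain ⟨μzx, hμzx⟩ := factor_through Φ U S z x hz hU hS hzx _ (kill U S z x cz cx hU hS hcz hcx)
  have hcoc : z ^ n • μxy + x ^ n • μyz + y ^ n • μzx = 0 := by
    apply vecMul_inj Φ S x hx hS
    rw [Matrix.add_vecMul, Matrix.add_vecMul, Matrix.smul_vecMul, Matrix.smul_vecMul,
      Matrix.smul_vecMul, ← hμxy, ← hμyz, ← hμzx]
    ext i
    simp
    ring
  have : ∀ l, ∃ u w, μxy l = x ^ n * u + y ^ n * w := fun l =>
    hxyz _ (μyz l) (μzx l) (by simpa using congrFun hcoc l)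
  choose u w huw using this
  have hμ : μxy = x ^ n • u + y ^ n • w := funext huw
  obtain ⟨c, hc⟩ := vec_dvd (v := cx - w ᵥ* Φ) (w := cy + u ᵥ* Φ) hxyn (by
    rw [hμ, Matrix.add_vecMul, Matrix.smul_vecMul, Matrix.smul_vecMul] at hμxy
    rw [smul_sub, smul_add]
    linear_combination (exp := 1) hμxy)
  have pair : ∀ v, Φ *ᵥ v = 0 → ∀ i j, Am Φ i j * (c ⬝ᵥ v) = s i * v j - v i * s j := by
    intro v hv i j
    have e1 := Am_mul_dl Φ i j S s v x hS hs hv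
    have e2 : dl Sᵀ s v = x ^ n * (c ⬝ᵥ v) := by
      rw [hcx, ← smul_eq_mul, ← smul_dotProduct, ← hc, sub_dotProduct, ← Matrix.dotProduct_mulVec,
        hv, dotProduct_zero, sub_zero]
    rw [e2] at e1
    apply mul_left_cancel₀ (pow_ne_zero n hx)
    linear_combination e1
  refine ⟨c, fun i => ?_⟩
  by_cases hi : ∃ j, Am Φ i j ≠ 0
  · obtain ⟨j, hj⟩ := hi
    have := pair _ (mulVec_Am Φ i) i j
    rw [Am_self] at this
    apply mul_left_cancel₀ hj
    change _ = _ * (c ⬝ᵥ Am Φ i)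
    rw [this]; ring
  · push Not at hi
    have := pair _ (mulVec_Am Φ i₀) i j₀
    have h2 : Am Φ i₀ i = 0 := by rw [Am_swap, hi, neg_zero]
    rw [hi, h2] at this
    simp only [zero_mul, sub_zero] at this
    have h5 := (mul_eq_zero.1 this.symm).resolve_right hA
    rw [h5]
    simp [hi]

end BR

/-! ### Part 2: polynomial preliminaries -/

section Poly

open MvPolynomial Matrix

variable {K : Type*} [Field K] {σ : Type*}

/-- homogeneous of integer degree `d`, any set of variables -/
def hg (p : MvPolynomial σ K) (d : ℤ) : Prop :=
  IsWeightedHomogeneous (fun _ : σ => (1 : ℤ)) p d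

/-- homogeneous component of integer degree -/
noncomputable def hcmp (d : ℤ) : MvPolynomial σ K →ₗ[K] MvPolynomial σ K :=
  weightedHomogeneousComponent (fun _ : σ => (1 : ℤ)) d

lemma weight_one (u : σ →₀ ℕ) : Finsupp.weight (fun _ : σ => (1 : ℤ)) u = (u.degree : ℤ) := by
  simp [Finsupp.weight_apply, Finsupp.degree_apply, Finsupp.sum]

lemma hg_coeff {p : MvPolynomial σ K} {d : ℤ} (hp : hg p d) {u : σ →₀ ℕ} (hu : coeff u p ≠ 0) :
    (u.degree : ℤ) = d := by
  rw [← weight_one]; exact hp hu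

lemma hg_iff {p : MvPolynomial σ K} {d : ℤ} :
    hg p d ↔ ∀ u : σ →₀ ℕ, coeff u p ≠ 0 → (u.degree : ℤ) = d := by
  refine ⟨fun h u hu => hg_coeff h hu, fun h u hu => ?_⟩
  rw [weight_one]; exact h u hu

lemma hg_neg {p : MvPolynomial σ K} {d : ℤ} (hp : hg p d) (hd : d < 0) : p = 0 := by
  ext u
  by_contra h
  have := hg_coeff hp h
  omega

lemma hg_zero (d : ℤ) : hg (0 : MvPolynomial σ K) d := isWeightedHomogeneous_zero _ _ _

lemma hg_one : hg (1 : MvPolynomial σ K) 0 := isWeightedHomogeneous_one _ _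

lemma hg_mul {p q : MvPolynomial σ K} {d e : ℤ} (hp : hg p d) (hq : hg q e) : hg (p * q) (d + e) :=
  IsWeightedHomogeneous.mul hp hq

lemma hg_X (i : σ) : hg (X i : MvPolynomial σ K) 1 := isWeightedHomogeneous_X _ _ i

lemma hg_X_pow (i : σ) (n : ℕ) : hg (X i ^ n : MvPolynomial σ K) n := by
  have := IsWeightedHomogeneous.pow (hg_X (K := K) i) n
  simpa [hg] using this

lemma hcmp_hg (d : ℤ) (p : MvPolynomial σ K) : hg (hcmp d p) d :=
  weightedHomogeneousComponent_isWeightedHomogeneous (w := fun _ : σ => (1 : ℤ)) d p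

lemma hcmp_same {d : ℤ} {p : MvPolynomial σ K} (hp : hg p d) : hcmp d p = p :=
  IsWeightedHomogeneous.weightedHomogeneousComponent_same hp

lemma hcmp_ne {d e : ℤ} {p : MvPolynomial σ K} (hp : hg p d) (h : e ≠ d) : hcmp e p = 0 :=
  IsWeightedHomogeneous.weightedHomogeneousComponent_ne e hp h

lemma coeff_hcmp (d : ℤ) (p : MvPolynomial σ K) (u : σ →₀ ℕ) :
    coeff u (hcmp d p) = if (u.degree : ℤ) = d then coeff u p else 0 := by
  classical
  rw [hcmp, coeff_weightedHomogeneousComponent, weight_one]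

lemma hcmp_mul {p q : MvPolynomial σ K} {d : ℤ} (hp : hg p d) (e : ℤ) :
    hcmp e (p * q) = p * hcmp (e - d) q := by
  classical
  ext u
  rw [coeff_hcmp, coeff_mul, coeff_mul, ← Finset.sum_const_zero (s := Finset.HasAntidiagonal.antidiagonal u),
    ← Finset.sum_ite_irrel]
  refine Finset.sum_congr rfl fun x hx => ?_
  rw [coeff_hcmp]
  by_cases h : coeff x.1 p = 0
  · simp [h]
  · have h1 := hg_coeff hp h
    have h2 : u.degree = x.1.degree + x.2.degree := by
      rw [← Finset.HasAntidiagonal.mem_antidiagonal.1 hx, map_add]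
    have h3 : ((u.degree : ℤ) = e) ↔ ((x.2.degree : ℤ) = e - d) := by
      rw [h2]; push_cast; omega
    simp [h3]

lemma hcmp_mulVec {r t : ℕ} {Ψ : Matrix (Fin r) (Fin t) (MvPolynomial σ K)} {a : Fin t → ℤ}
    {b : Fin r → ℤ} (hΨ : ∀ j i, hg (Ψ j i) (a i - b j)) (f : Fin t → MvPolynomial σ K) (e : ℤ)
    (j : Fin r) :
    hcmp (e - b j) ((Ψ *ᵥ f) j) = (Ψ *ᵥ fun i => hcmp (e - a i) (f i)) j := by
  simp only [Matrix.mulVec, dotProduct, map_sum]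
  refine Finset.sum_congr rfl fun i _ => ?_
  have e1 : e - b j - (a i - b j) = e - a i := by ring
  rw [hcmp_mul (hΨ j i), e1]

/-- if a homogeneous vector is in the image, it is the image of a homogeneous vector -/
lemma lift_homog {r t : ℕ} {Ψ : Matrix (Fin r) (Fin t) (MvPolynomial σ K)} {a : Fin t → ℤ}
    {b : Fin r → ℤ} (hΨ : ∀ j i, hg (Ψ j i) (a i - b j)) (f : Fin t → MvPolynomial σ K) (e : ℤ)
    (g : Fin r → MvPolynomial σ K) (hg' : ∀ j, hg (g j) (e - b j)) (h : Ψ *ᵥ f = g) :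
    Ψ *ᵥ (fun i => hcmp (e - a i) (f i)) = g := by
  ext1 j
  rw [← hcmp_mulVec hΨ, h, hcmp_same (hg' j)]

lemma hg_det {ι : Type*} [Fintype ι] [DecidableEq ι] (M : Matrix ι ι (MvPolynomial σ K))
    (α β : ι → ℤ) (h : ∀ p q, hg (M p q) (α q - β p)) : hg M.det (∑ i, α i - ∑ i, β i) := by
  rw [Matrix.det_apply]
  refine IsWeightedHomogeneous.sum _ _ _ fun τ _ => ?_
  have h1 : hg (∏ i, M (τ i) i) (∑ i, α i - ∑ i, β i) := by
    have := IsWeightedHomogeneous.prod Finset.univ (fun i => M (τ i) i)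
      (fun i => α i - β (τ i)) (fun i _ => h (τ i) i)
    rw [Finset.sum_sub_distrib, Equiv.sum_comp τ β] at this
    exact this
  rcases Int.units_eq_one_or (Equiv.Perm.sign τ) with h2 | h2
  · rw [h2, one_smul]; exact h1
  · rw [h2, Units.neg_smul, one_smul]; exact IsWeightedHomogeneous.neg h1

lemma hg_Am {n : ℕ} {Φ : Matrix (Fin n) (Fin (n + 2)) (MvPolynomial σ K)} {a : Fin (n + 2) → ℤ}
    {b : Fin n → ℤ} (hΦ : ∀ j i, hg (Φ j i) (a i - b j)) (i j : Fin (n + 2)) :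
    hg (Am Φ i j) ((∑ i, a i) - (∑ j, b j) - a i - a j) := by
  have h := hg_det (bord Φ (Pi.single i 1) (Pi.single j 1)) (a ∘ finSumFinEquiv)
    (Sum.elim b ![a i, a j]) (by
      have hs : ∀ i q : Fin (n + 2),
          hg ((Pi.single i 1 : Fin (n + 2) → MvPolynomial σ K) q) (a q - a i) := by
        intro i q
        by_cases hq : q = i
        · subst hq; simpa using hg_one
        · simpa [hq] using hg_zero _
      intro p q
      rcases p with p | p
      · exact hΦ p _
      · fin_cases p
        · exact hs _ _
        · exact hs _ _)
  have e1 : ∑ q, (a ∘ finSumFinEquiv) q = ∑ i, a i := Equiv.sum_comp finSumFinEquiv a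
  rw [e1, Fintype.sum_sum_type] at h
  simp only [Sum.elim_inl, Sum.elim_inr, Fin.sum_univ_two, Matrix.cons_val_zero,
    Matrix.cons_val_one] at h
  have e2 : (∑ i, a i) - (∑ j, b j) - a i - a j = ∑ i, a i - (∑ j, b j + (a i + a j)) := by omega
  rw [e2]
  exact h

lemma X_pow_dvd {i j : σ} (hij : i ≠ j) (p q : ℕ) (P Q : MvPolynomial σ K)
    (h : X j ^ p * P = X i ^ q * Q) : X i ^ q ∣ P := by
  have h1 : IsRelPrime (X i : MvPolynomial σ K) (X j) :=
    ((X_prime (i := i)).irreducible.isRelPrime_iff_not_dvd).2 (by simpa [X_dvd_X] using hij)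
  exact (IsRelPrime.pow h1 (m := q) (n := p)).dvd_of_dvd_mul_left ⟨Q, h⟩

lemma mem_XX {i j : σ} {a b : ℕ} {p : MvPolynomial σ K} :
    (∃ u w, p = X i ^ a * u + X j ^ b * w) ↔ ∀ m ∈ p.support, a ≤ m i ∨ b ≤ m j := by
  classical
  have h := mem_ideal_span_monomial_image (x := p)
    (s := {Finsupp.single i a, Finsupp.single j b})
  have e : (fun s => (monomial s) (1 : K)) '' {Finsupp.single i a, Finsupp.single j b}
      = {X i ^ a, X j ^ b} := by
    simp [Set.image_pair, X_pow_eq_monomial]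
  rw [e, Ideal.mem_span_pair] at h
  simp only [Set.mem_insert_iff, Set.mem_singleton_iff, exists_eq_or_imp, exists_eq_left,
    Finsupp.single_le_iff] at h
  rw [← h]
  constructor
  · rintro ⟨u, w, rfl⟩; exact ⟨u, w, by ring⟩
  · rintro ⟨u, w, rfl⟩; exact ⟨u, w, by ring⟩

lemma koszul3 {i j l : σ} (hil : i ≠ l) (hjl : j ≠ l) (a b c : ℕ) (p q r : MvPolynomial σ K)
    (h : X l ^ c * p + X i ^ a * q + X j ^ b * r = 0) :
    ∃ u w, p = X i ^ a * u + X j ^ b * w := by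
  classical
  have h1 : ∃ u w, X l ^ c * p = X i ^ a * u + X j ^ b * w :=
    ⟨-q, -r, by linear_combination h⟩
  rw [mem_XX] at h1 ⊢
  intro m hm
  have := h1 (Finsupp.single l c + m) (by
    rw [X_pow_eq_monomial, mem_support_iff, coeff_monomial_mul]
    simpa using hm)
  simpa [Finsupp.single_apply, hil.symm, hjl.symm] using this

end Poly

/-! ### Part 3: the special column, primitivity, general linear forms -/

section Special

open MvPolynomial Matrix

variable {K : Type*} [Field K]

lemma exists_split {n : ℕ} {a : Fin (n + 2) → ℤ} {b : Fin n → ℤ}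
    {Φ : Matrix (Fin n) (Fin (n + 2)) (MvPolynomial (Fin 3) K)}
    (hfin : FiniteColength n a b Φ) : ∃ T : ℕ, ∀ t : Fin 3,
      ∃ S : Matrix (Fin (n + 2)) (Fin n) (MvPolynomial (Fin 3) K), 
        Φ * S = (X t ^ T : MvPolynomial (Fin 3) K) •
          (1 : Matrix (Fin n) (Fin n) (MvPolynomial (Fin 3) K)) := by
  obtain ⟨D, hD⟩ := hfin
  refine ⟨∑ j, (D - b j).toNat, fun t => ?_⟩
  set T := ∑ j, (D - b j).toNat with hT
  have h1 : ∀ j, D ≤ T + b j := by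
    intro j
    have : (D - b j).toNat ≤ T :=
      Finset.single_le_sum (f := fun j => (D - b j).toNat) (fun _ _ => Nat.zero_le _)
        (Finset.mem_univ j)
    omega
  have h2 : ∀ j, ∃ f : Fin (n + 2) → MvPolynomial (Fin 3) K,
      Φ *ᵥ f = (Pi.single j (X t ^ T : MvPolynomial (Fin 3) K) :
        Fin n → MvPolynomial (Fin 3) K) := by
    intro j
    have h3 : (Pi.single j (X t ^ T : MvPolynomial (Fin 3) K) : Fin n → MvPolynomial (Fin 3) K) ∈
        degPiece (K := K) n b (T + b j) := by
      rw [mem_degPiece]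
      intro i
      by_cases hi : i = j
      · subst hi
        have := hg_X_pow (K := K) t T
        simpa [homog, hg] using this
      · rw [Pi.single_eq_of_ne hi]; exact hg_zero _
    obtain ⟨f, -, hf⟩ := hD _ (h1 j) h3
    exact ⟨f, hf⟩
  choose f hf using h2
  refine ⟨Matrix.of fun i j => f j i, ?_⟩
  ext l j
  have := congrFun (hf j) l
  simp only [Matrix.mulVec, dotProduct] at this
  simp only [Matrix.mul_apply, Matrix.of_apply, Matrix.smul_apply, Matrix.one_apply, this]
  simp [Pi.single_apply]

lemma exists_col {n : ℕ} {a : Fin (n + 2) → ℤ} {b : Fin n → ℤ}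
    {Φ : Matrix (Fin n) (Fin (n + 2)) (MvPolynomial (Fin 3) K)}
    (hΦ : ∀ j i, hg (Φ j i) (a i - b j))
    (hfin : FiniteColength n a b Φ) (m : ℤ) (hm : (∑ i, a i) - (∑ j, b j) = 2 * m)
    (e : ℤ) (s : Fin (n + 2) → MvPolynomial (Fin 3) K) (hs : ∀ i, hg (s i) (e - a i))
    (hΦs : Φ *ᵥ s = 0) (hs0 : s ≠ 0) : ∃ i, Am Φ i ≠ 0 ∧ 2 * m - e ≤ a i := by
  classical
  obtain ⟨T, hT⟩ := exists_split hfin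
  obtain ⟨S0, hS0⟩ := hT 0
  obtain ⟨S1, hS1⟩ := hT 1
  obtain ⟨S2, hS2⟩ := hT 2
  have hne : ∀ t : Fin 3, (X t ^ T : MvPolynomial (Fin 3) K) ≠ 0 :=
    fun t => pow_ne_zero _ (X_ne_zero t)
  obtain ⟨c, hc⟩ := buchsbaum_rim Φ S0 S1 S2 _ _ _ (hne 0) (hne 1) (hne 2) hS0 hS1 hS2
    (fun p q h => X_pow_dvd (by decide) T T p q h) (fun p q h => X_pow_dvd (by decide) T T p q h)
    (fun p q h => X_pow_dvd (by decide) T T p q h)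
    (fun p q h => by
      rw [← pow_mul] at h ⊢
      rw [← pow_mul] at h
      exact X_pow_dvd (by decide) _ _ p q h)
    (fun p q r h => by
      simp only [← pow_mul] at h ⊢
      exact koszul3 (by decide) (by decide) _ _ _ p q r h) s hΦs
  obtain ⟨i, hi⟩ := Function.ne_iff.1 hs0
  obtain ⟨u, hu⟩ := MvPolynomial.ne_zero_iff.1 hi
  have hdu := hg_coeff (hs i) hu
  rw [hc i, coeff_sum] at hu
  obtain ⟨l, -, hl⟩ := Finset.exists_ne_zero_of_sum_ne_zero hu
  rw [coeff_mul] at hl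
  obtain ⟨x, hx, hx0⟩ := Finset.exists_ne_zero_of_sum_ne_zero hl
  have hA := right_ne_zero_of_mul hx0
  have hdx := hg_coeff (hg_Am hΦ i l) hA
  have h2 : u.degree = x.1.degree + x.2.degree := by
    rw [← Finset.HasAntidiagonal.mem_antidiagonal.1 hx, map_add]
  refine ⟨l, ?_, by omega⟩
  intro h0
  apply hA
  rw [Am_swap, h0]
  simp

lemma exists_totalDegree {σ : Type*} (p : MvPolynomial σ K) (hp : p ≠ 0) :
    ∃ u, coeff u p ≠ 0 ∧ u.degree = p.totalDegree := by
  obtain ⟨u, hu, h⟩ := Finset.exists_mem_eq_sup p.support (by simpa using hp)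
    (fun s => s.sum fun _ e => e)
  exact ⟨u, by simpa using hu, by rw [totalDegree, h]; rfl⟩

lemma primitive_of_minimal {n : ℕ} {a : Fin (n + 2) → ℤ} {b : Fin n → ℤ}
    {Φ : Matrix (Fin n) (Fin (n + 2)) (MvPolynomial (Fin 3) K)}
    (hΦ : ∀ j i, hg (Φ j i) (a i - b j))
    (e : ℤ) (s : Fin (n + 2) → MvPolynomial (Fin 3) K) (hs : ∀ i, hg (s i) (e - a i))
    (hΦs : Φ *ᵥ s = 0) (hs0 : s ≠ 0)
    (hmin : ∀ e' : ℤ, ∀ v : Fin (n + 2) → MvPolynomial (Fin 3) K, v ≠ 0 → Φ *ᵥ v = 0 →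
      (∀ i, hg (v i) (e' - a i)) → e ≤ e')
    (g : MvPolynomial (Fin 3) K) (hgs : ∀ i, g ∣ s i) : IsUnit g := by
  choose v hv using hgs
  have hsv : s = g • v := funext hv
  obtain ⟨j, hj⟩ := Function.ne_iff.1 hs0
  have hj' : s j ≠ 0 := hj
  rw [hv j] at hj'
  have hg0 := left_ne_zero_of_mul hj'
  have hv0 := right_ne_zero_of_mul hj'
  have hΦv : Φ *ᵥ v = 0 := by
    rw [hsv, Matrix.mulVec_smul] at hΦs
    exact (smul_eq_zero.1 hΦs).resolve_left hg0
  have htot := totalDegree_mul_of_isDomain hg0 hv0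
  rw [← hv j] at htot
  obtain ⟨u, hu, hud⟩ := exists_totalDegree (s j) hj
  obtain ⟨w, hw, hwd⟩ := exists_totalDegree (v j) hv0
  have h1 := hg_coeff (hs j) hu
  have h2 := hmin (w.degree + a j) (fun i => hcmp (w.degree + a j - a i) (v i)) (by
      intro h0
      have := congrFun h0 j
      have h3 := congrArg (coeff w) this
      rw [coeff_hcmp] at h3
      simp [hw] at h3)
    (by
      have := lift_homog hΦ v (w.degree + a j) 0 (fun _ => hg_zero _) hΦv
      exact this)
    (fun i => hcmp_hg _ _)
  have h3 : g.totalDegree = 0 := by omega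
  rw [totalDegree_eq_zero_iff_eq_C] at h3
  rw [h3] at hg0 ⊢
  have : coeff 0 g ≠ 0 := by
    intro h; rw [h] at hg0; simp at hg0
  exact (this.isUnit).map C

/-- restriction to the line through `pt` -/
noncomputable def lineHom (pt : Fin 3 → K) : MvPolynomial (Fin 3) K →ₐ[K] Polynomial K :=
  aeval (fun i => Polynomial.C (pt i) * Polynomial.X)

lemma lineHom_hg (pt : Fin 3 → K) {p : MvPolynomial (Fin 3) K} {d : ℤ} (hp : hg p d)
    (h0 : eval pt p = 0) : lineHom pt p = 0 := by
  have h1 : lineHom pt p = Polynomial.C (eval pt p) * Polynomial.X ^ d.toNat := by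
    rw [lineHom, aeval_def, eval₂_eq', eval_eq', map_sum, Finset.sum_mul]
    refine Finset.sum_congr rfl fun u hu => ?_
    have hd := hg_coeff hp (mem_support_iff.1 hu)
    have hd2 : d.toNat = ∑ i, u i := by rw [← Finsupp.degree_eq_sum]; omega
    rw [hd2, ← Finset.prod_pow_eq_pow_sum]
    simp only [mul_pow, Finset.prod_mul_distrib, map_mul, map_prod, map_pow,
      Polynomial.algebraMap_eq]
    ring
  rw [h1, h0]; simp

lemma eval_linform (c pt : Fin 3 → K) : eval pt (linform c) = ∑ i, c i * pt i := by
  simp [linform]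

/-- linear map `c ↦ linform c` -/
noncomputable def linL : (Fin 3 → K) →ₗ[K] MvPolynomial (Fin 3) K where
  toFun := linform
  map_add' c d := by simp [linform, add_mul, Finset.sum_add_distrib]
  map_smul' r c := by simp [linform, Finset.mul_sum, mul_assoc, MvPolynomial.smul_eq_C_mul]

lemma linform_single (i : Fin 3) : linform (Pi.single i (1 : K)) = X i := by
  unfold linform
  rw [Finset.sum_eq_single i]
  · simp
  · intro j _ hj; simp [hj]
  · simp

lemma exists_avoid (p : Ideal (MvPolynomial (Fin 3) K)) :
    ∃ P : MvPolynomial (Fin 3) K, P ≠ 0 ∧ ∀ c, eval c P ≠ 0 → (∃ i, X i ∉ p) → linform c ∉ p := by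
  by_cases hp : ∃ i : Fin 3, X i ∉ p
  · obtain ⟨i, hi⟩ := hp
    let V : Submodule K (Fin 3 → K) := (p.restrictScalars K).comap linL
    have hV : V < ⊤ := by
      rw [lt_top_iff_ne_top]
      intro h
      apply hi
      have : Pi.single i (1 : K) ∈ V := by rw [h]; trivial
      rw [← linform_single]
      exact this
    obtain ⟨ℓ, hℓ, hker⟩ := Submodule.exists_le_ker_of_lt_top V hV
    have he : ∀ c, eval c (linform fun i => ℓ (Pi.single i 1)) = ℓ c := by
      intro c
      rw [eval_linform, LinearMap.pi_apply_eq_sum_univ ℓ c]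
      refine Finset.sum_congr rfl fun j _ => ?_
      rw [smul_eq_mul, mul_comm]
      congr 2
      ext i
      simp [Pi.single_apply, eq_comm]
    refine ⟨linform fun i => ℓ (Pi.single i 1), ?_, ?_⟩
    · intro h0
      apply hℓ
      refine LinearMap.ext fun c => ?_
      rw [← he, h0]
      simp
    · intro c hc _ hmem
      apply hc
      rw [he]
      exact hker (show c ∈ V from hmem)
  · exact ⟨1, one_ne_zero, fun c _ h => absurd h hp⟩

lemma exists_general {N : ℕ} (s : Fin N → MvPolynomial (Fin 3) K) (d : Fin N → ℤ)
    (hs : ∀ i, hg (s i) (d i)) (hs0 : s ≠ 0)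
    (hprim : ∀ g : MvPolynomial (Fin 3) K, (∀ i, g ∣ s i) → IsUnit g) :
    ∃ P : MvPolynomial (Fin 3) K, P ≠ 0 ∧ ∀ c, eval c P ≠ 0 → c 2 ≠ 0 ∧
      ∀ pt : Fin 3 → K, pt ≠ 0 → eval pt (linform c) = 0 → ∃ i, eval pt (s i) ≠ 0 := by
  classical
  let I : Ideal (MvPolynomial (Fin 3) K) := Ideal.span (Set.range s)
  have hfin : I.minimalPrimes.Finite := Ideal.finite_minimalPrimes_of_isNoetherianRing _ I
  choose P hP0 hP using exists_avoid (K := K)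
  refine ⟨X 2 * ∏ p ∈ hfin.toFinset, P p,
    mul_ne_zero (X_ne_zero _) (Finset.prod_ne_zero_iff.2 fun p _ => hP0 p), ?_⟩
  intro c hc
  rw [map_mul, eval_X, map_prod] at hc
  refine ⟨left_ne_zero_of_mul hc, ?_⟩
  have hc2 := Finset.prod_ne_zero_iff.1 (right_ne_zero_of_mul hc)
  intro pt hpt hL
  by_contra! hall
  let q : Ideal (MvPolynomial (Fin 3) K) := RingHom.ker (lineHom pt).toRingHom
  have hqp : q.IsPrime := RingHom.ker_isPrime _
  have hmemq : ∀ f, f ∈ q ↔ lineHom pt f = 0 := fun f => Iff.rfl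
  have hIq : I ≤ q := by
    rw [Ideal.span_le]
    rintro _ ⟨i, rfl⟩
    exact lineHom_hg pt (hs i) (hall i)
  obtain ⟨p, hpmin, hpq⟩ := Ideal.exists_minimalPrimes_le hIq
  have hpp : p.IsPrime := hpmin.1.1
  have hIp : I ≤ p := hpmin.1.2
  have hsp : ∀ i, s i ∈ p := fun i => hIp (Ideal.subset_span ⟨i, rfl⟩)
  obtain ⟨t, ht⟩ := Function.ne_iff.1 hpt
  have hXq : (X t : MvPolynomial (Fin 3) K) ∉ q := by
    rw [hmemq]
    simpa [lineHom] using ht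
  have hLq : linform c ∈ q := lineHom_hg pt (homog_linform c) hL
  have hpq' : p < q := by
    refine lt_of_le_of_ne hpq fun h => ?_
    subst h
    exact hP _ c (hc2 _ (hfin.mem_toFinset.2 hpmin)) ⟨t, hXq⟩ hLq
  have hpbot : p ≠ ⊥ := by
    rintro rfl
    exact hs0 (funext fun i => by simpa using hsp i)
  obtain ⟨g, hgp, hgprime⟩ := hpp.exists_mem_prime_of_ne_bot hpbot
  have hgI : (Ideal.span {g}).IsPrime := (Ideal.span_singleton_prime hgprime.ne_zero).2 hgprime
  have hgp' : Ideal.span {g} < p := by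
    refine lt_of_le_of_ne ((Ideal.span_singleton_le_iff_mem _).2 hgp) fun h => ?_
    apply hgprime.not_isUnit
    apply hprim
    intro i
    rw [← Ideal.mem_span_singleton, h]
    exact hsp i
  let M : Ideal (MvPolynomial (Fin 3) K) := RingHom.ker (constantCoeff (σ := Fin 3) (R := K))
  have hMp : M.IsPrime := RingHom.ker_isPrime _
  have hqM : q < M := by
    refine lt_of_le_of_ne ?_ fun h => hXq ?_
    · intro f hf
      have h1 : (Polynomial.aeval (0 : K)).comp (lineHom pt) = aeval (0 : Fin 3 → K) := by
        ext i
        simp [lineHom]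
      have h2 := congrArg (fun F => F f) h1
      simp only [AlgHom.comp_apply, (hmemq f).1 hf, map_zero] at h2
      have h3 : constantCoeff f = 0 := by
        have h5 : (aeval (0 : Fin 3 → K)) f = constantCoeff f := by
          rw [MvPolynomial.aeval_zero]; rfl
        rw [← h5, ← h2]
      exact h3
    · rw [h]
      show constantCoeff (X t) = 0
      simp
  have hbot : (⊥ : Ideal (MvPolynomial (Fin 3) K)) < Ideal.span {g} := by
    rw [bot_lt_iff_ne_bot, Ne, Ideal.span_singleton_eq_bot]
    exact hgprime.ne_zero
  have hdim : ringKrullDim (MvPolynomial (Fin 3) K) = 3 := by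
    rw [MvPolynomial.ringKrullDim_of_isNoetherianRing]
    simp [ringKrullDim_eq_zero_of_field]
  let ser : LTSeries (PrimeSpectrum (MvPolynomial (Fin 3) K)) :=
    LTSeries.mk 4 ![⟨⊥, Ideal.isPrime_bot⟩, ⟨_, hgI⟩, ⟨p, hpp⟩, ⟨q, hqp⟩, ⟨M, hMp⟩] (by
      rw [Fin.strictMono_iff_lt_succ]
      intro i
      fin_cases i
      · exact hbot
      · exact hgp'
      · exact hpq'
      · exact hqM)
  have h4 : ((4 : ℕ) : WithBot ℕ∞) ≤ ringKrullDim (MvPolynomial (Fin 3) K) :=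
    Order.LTSeries.length_le_krullDim ser
  rw [hdim] at h4
  have : (4 : ℕ) ≤ 3 := by exact_mod_cast h4
  omega

end Special

/-! ### Part 4: restriction to a line -/

section Line

open MvPolynomial Matrix

variable {K : Type*} [Field K]

/-- restriction to the line `linform c = 0` -/
noncomputable def resL (c : Fin 3 → K) : MvPolynomial (Fin 3) K →ₐ[K] MvPolynomial (Fin 2) K :=
  aeval ![X 0, X 1, C (-(c 0 / c 2)) * X 0 + C (-(c 1 / c 2)) * X 1]

/-- section of `resL` -/
noncomputable def secL : MvPolynomial (Fin 2) K →ₐ[K] MvPolynomial (Fin 3) K :=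
  aeval ![X 0, X 1]

lemma resL_secL (c : Fin 3 → K) (f : MvPolynomial (Fin 2) K) : resL c (secL f) = f := by
  have : (resL c).comp (secL (K := K)) = AlgHom.id K _ := by
    ext i
    fin_cases i <;> simp [resL, secL]
  exact congrArg (fun F => F f) this

lemma sub_secL_resL (c : Fin 3 → K) (hc : c 2 ≠ 0) (f : MvPolynomial (Fin 3) K) :
    linform c ∣ f - secL (resL c f) := by
  rw [← Ideal.mem_span_singleton, ← Ideal.Quotient.eq]
  have : (Ideal.Quotient.mkₐ K (Ideal.span {linform c})) =
      (Ideal.Quotient.mkₐ K (Ideal.span {linform c})).comp ((secL (K := K)).comp (resL c)) := by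
    ext i
    fin_cases i
    · simp [resL, secL]
    · simp [resL, secL]
    · simp only [AlgHom.comp_apply, Ideal.Quotient.mkₐ_eq_mk]
      rw [Ideal.Quotient.eq, Ideal.mem_span_singleton]
      refine ⟨C (c 2)⁻¹, ?_⟩
      have h2 : C (c 2) * C (c 2)⁻¹ = (1 : MvPolynomial (Fin 3) K) := by
        rw [← C_mul, mul_inv_cancel₀ hc, C_1]
      simp [resL, secL, linform, Fin.sum_univ_three, div_eq_mul_inv, C_mul, algHom_C,
        algebraMap_eq]
      linear_combination (-X 2) * h2
  exact congrArg (fun F => F f) this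

lemma resL_linform (c : Fin 3 → K) (hc : c 2 ≠ 0) : resL c (linform c) = 0 := by
  have h2 : C (c 2) * C (c 2)⁻¹ = (1 : MvPolynomial (Fin 2) K) := by
    rw [← C_mul, mul_inv_cancel₀ hc, C_1]
  simp [resL, linform, Fin.sum_univ_three, div_eq_mul_inv, C_mul, algHom_C, algebraMap_eq]
  linear_combination (-(C (c 0) * X 0 + C (c 1) * X 1)) * h2

lemma hg_resL (c : Fin 3 → K) {p : MvPolynomial (Fin 3) K} {d : ℤ} (hp : hg p d) :
    hg (resL c p) d := by
  have hX : ∀ i : Fin 3, hg ((![X 0, X 1, C (-(c 0 / c 2)) * X 0 + C (-(c 1 / c 2)) * X 1] :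
      Fin 3 → MvPolynomial (Fin 2) K) i) 1 := by
    have hCX : ∀ (r : K) (i : Fin 2), hg (C r * X i) 1 := by
      intro r i
      have := hg_mul (isWeightedHomogeneous_C (fun _ : Fin 2 => (1 : ℤ)) r) (hg_X (K := K) i)
      simpa using this
    intro i
    fin_cases i
    · exact hg_X 0
    · exact hg_X 1
    · exact IsWeightedHomogeneous.add (hCX _ 0) (hCX _ 1)
  rw [resL, aeval_def, eval₂_eq']
  refine IsWeightedHomogeneous.sum _ _ _ fun u hu => ?_
  have hd := hg_coeff hp (mem_support_iff.1 hu)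
  have h1 := IsWeightedHomogeneous.prod Finset.univ (fun i => (![X 0, X 1,
      C (-(c 0 / c 2)) * X 0 + C (-(c 1 / c 2)) * X 1] : Fin 3 → MvPolynomial (Fin 2) K) i ^ u i)
      (fun i => u i • (1 : ℤ)) (fun i _ => IsWeightedHomogeneous.pow (hX i) (u i))
  have h2 := IsWeightedHomogeneous.mul
    (isWeightedHomogeneous_C (fun _ : Fin 2 => (1 : ℤ)) (coeff u p)) h1
  have h3 : (0 : ℤ) + ∑ i, u i • (1 : ℤ) = d := by
    rw [← hd, Finsupp.degree_eq_sum]; simp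
  rw [h3] at h2
  exact h2

lemma eval_resL (c : Fin 3 → K) (pt : Fin 2 → K) (f : MvPolynomial (Fin 3) K) :
    eval pt (resL c f) =
      eval ![pt 0, pt 1, -(c 0 / c 2) * pt 0 + -(c 1 / c 2) * pt 1] f := by
  have : (aeval pt : MvPolynomial (Fin 2) K →ₐ[K] K).comp (resL c) =
      aeval ![pt 0, pt 1, -(c 0 / c 2) * pt 0 + -(c 1 / c 2) * pt 1] := by
    ext i
    fin_cases i <;> simp [resL]
  have h := congrArg (fun F => F f) this
  simpa [coe_aeval_eq_eval] using h

lemma exists_pow_mem [IsAlgClosed K] {N : ℕ} (s : Fin N → MvPolynomial (Fin 2) K)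
    (h : ∀ pt : Fin 2 → K, pt ≠ 0 → ∃ i, eval pt (s i) ≠ 0) :
    ∃ T : ℕ, ∀ t : Fin 2, X t ^ T ∈ Ideal.span (Set.range s) := by
  have h1 : ∀ t : Fin 2, ∃ T : ℕ, X t ^ T ∈ Ideal.span (Set.range s) := by
    intro t
    have : X t ∈ (Ideal.span (Set.range s)).radical := by
      rw [← vanishingIdeal_zeroLocus_eq_radical (K := K) (k := K), mem_vanishingIdeal_iff]
      intro x hx
      rw [mem_zeroLocus_iff] at hx
      have hx0 : x = 0 := by
        by_contra h0
        obtain ⟨i, hi⟩ := h x h0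
        apply hi
        have := hx (s i) (Ideal.subset_span ⟨i, rfl⟩)
        simpa [coe_aeval_eq_eval] using this
      simp [hx0]
    exact this
  choose T hT using h1
  refine ⟨T 0 + T 1, fun t => ?_⟩
  fin_cases t
  · show X 0 ^ (T 0 + T 1) ∈ _
    rw [pow_add]; exact Ideal.mul_mem_right _ _ (hT 0)
  · show X 1 ^ (T 0 + T 1) ∈ _
    rw [pow_add]; exact Ideal.mul_mem_left _ _ (hT 1)

lemma ker_line {n : ℕ} (Ψ : Matrix (Fin n) (Fin (n + 2)) (MvPolynomial (Fin 2) K))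
    (i0 : Fin (n + 2)) (T : ℕ)
    (hT : ∀ t : Fin 2, X t ^ T ∈ Ideal.span (Set.range (Am Ψ i0))) (hs : Am Ψ i0 ≠ 0)
    (v : Fin (n + 2) → MvPolynomial (Fin 2) K) (hv : Ψ *ᵥ v = 0) (h0 : v i0 = 0) :
    ∃ p : MvPolynomial (Fin 2) K, v = p • Am Ψ i0 := by
  have h1 : ∀ t : Fin 2, ∃ p : MvPolynomial (Fin 2) K,
      (X t ^ T : MvPolynomial (Fin 2) K) • v = p • Am Ψ i0 := by
    intro t
    obtain ⟨c, hc⟩ := (Ideal.mem_span_range_iff_exists_fun).1 (hT t)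
    refine ⟨∑ l, c l * v l, ?_⟩
    ext1 j
    simp only [Pi.smul_apply, smul_eq_mul]
    rw [← hc, Finset.sum_mul, Finset.sum_mul]
    refine Finset.sum_congr rfl fun l _ => ?_
    rw [mul_assoc, Am_prop Ψ i0 v hv h0 l j]
    ring
  obtain ⟨p0, hp0⟩ := h1 0
  obtain ⟨p1, hp1⟩ := h1 1
  obtain ⟨j, hj⟩ := Function.ne_iff.1 hs
  have hj' : Am Ψ i0 j ≠ 0 := hj
  have e0 := congrFun hp0 j
  have e1 := congrFun hp1 j
  simp only [Pi.smul_apply, smul_eq_mul] at e0 e1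
  have h2 : X 1 ^ T * p0 = X 0 ^ T * p1 := by
    apply mul_right_cancel₀ hj'
    linear_combination (X 0 ^ T) * e1 - (X 1 ^ T) * e0
  obtain ⟨p, hp⟩ := X_pow_dvd (by decide) T T p0 p1 h2
  refine ⟨p, ?_⟩
  have h3 : (X 0 ^ T : MvPolynomial (Fin 2) K) ≠ 0 := pow_ne_zero _ (X_ne_zero _)
  ext1 l
  have e2 := congrFun hp0 l
  simp only [Pi.smul_apply, smul_eq_mul] at e2 ⊢
  apply mul_left_cancel₀ h3
  rw [e2, hp]; ring

/-- image of vectors with vanishing `i0` coordinate -/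
noncomputable def im0 {n : ℕ} (Ψ : Matrix (Fin n) (Fin (n + 2)) (MvPolynomial (Fin 2) K))
    (i0 : Fin (n + 2)) : Submodule (MvPolynomial (Fin 2) K) (Fin n → MvPolynomial (Fin 2) K) :=
  (LinearMap.ker (LinearMap.proj i0 :
    (Fin (n + 2) → MvPolynomial (Fin 2) K) →ₗ[MvPolynomial (Fin 2) K] _)).map Ψ.mulVecLin

lemma mem_im0 {n : ℕ} {Ψ : Matrix (Fin n) (Fin (n + 2)) (MvPolynomial (Fin 2) K)}
    {i0 : Fin (n + 2)} {g} : g ∈ im0 Ψ i0 ↔ ∃ f, f i0 = 0 ∧ Ψ *ᵥ f = g := by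
  simp [im0, Submodule.mem_map]

lemma im0_large {n : ℕ} (Ψ : Matrix (Fin n) (Fin (n + 2)) (MvPolynomial (Fin 2) K))
    (i0 : Fin (n + 2)) (T : ℕ)
    (hT : ∀ t : Fin 2, X t ^ T ∈ Ideal.span (Set.range (Am Ψ i0)))
    (p : MvPolynomial (Fin 2) K) (d : ℤ) (hp : hg p d) (hd : 2 * (T : ℤ) ≤ d)
    (g : Fin n → MvPolynomial (Fin 2) K) : p • g ∈ im0 Ψ i0 := by
  have h1 : ∀ t : Fin 2, (X t ^ T : MvPolynomial (Fin 2) K) • g ∈ im0 Ψ i0 := by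
    intro t
    obtain ⟨c, hc⟩ := (Ideal.mem_span_range_iff_exists_fun).1 (hT t)
    rw [← hc, Finset.sum_smul]
    refine sum_mem fun l _ => ?_
    rw [mul_smul]
    exact Submodule.smul_mem _ _ (mem_im0.2 (Am_cramer Ψ i0 l g))
  obtain ⟨u, w, huw⟩ := (mem_XX (i := (0 : Fin 2)) (j := 1) (a := T) (b := T) (p := p)).2 (by
    intro x hx
    have := hg_coeff hp (mem_support_iff.1 hx)
    rw [Finsupp.degree_eq_sum, Fin.sum_univ_two] at this
    omega)
  rw [huw, add_smul, mul_comm, mul_smul, mul_comm (X 1 ^ T), mul_smul]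
  exact add_mem (Submodule.smul_mem _ _ (h1 0)) (Submodule.smul_mem _ _ (h1 1))

lemma line_surj {n : ℕ} {a : Fin (n + 2) → ℤ} {b : Fin n → ℤ}
    (Ψ : Matrix (Fin n) (Fin (n + 2)) (MvPolynomial (Fin 2) K))
    (hΨ : ∀ j i, hg (Ψ j i) (a i - b j)) (i0 : Fin (n + 2)) (T : ℕ)
    (hT : ∀ t : Fin 2, X t ^ T ∈ Ideal.span (Set.range (Am Ψ i0))) (hs : Am Ψ i0 ≠ 0)
    (e : ℤ) (he : ∀ j, hg (Am Ψ i0 j) (e - a j))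
    (d : ℤ) (hd : e - 1 ≤ d) (g : Fin n → MvPolynomial (Fin 2) K)
    (hgd : ∀ j, hg (g j) (d - b j)) : ∃ f, f i0 = 0 ∧ Ψ *ᵥ f = g := by
  -- a bound beyond which everything is in the image
  have hbase : ∃ D : ℤ, ∀ d, D ≤ d → ∀ g : Fin n → MvPolynomial (Fin 2) K,
      (∀ j, hg (g j) (d - b j)) → g ∈ im0 Ψ i0 := by
    refine ⟨∑ j, |b j| + 2 * T, fun d hd g hgd => ?_⟩
    have hsum : g = ∑ j, g j • (Pi.single j 1 : Fin n → MvPolynomial (Fin 2) K) := by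
      ext1 l
      simp [Finset.sum_apply, Pi.single_apply]
    rw [hsum]
    refine sum_mem fun j _ => im0_large Ψ i0 T hT (g j) _ (hgd j) ?_ _
    have : |b j| ≤ ∑ j, |b j| :=
      Finset.single_le_sum (f := fun j => |b j|) (fun _ _ => abs_nonneg _) (Finset.mem_univ j)
    have := le_abs_self (b j)
    omega
  obtain ⟨D, hD⟩ := hbase
  have main : ∀ N : ℕ, ∀ d : ℤ, e - 1 ≤ d → D ≤ d + N → ∀ g : Fin n → MvPolynomial (Fin 2) K,
      (∀ j, hg (g j) (d - b j)) → g ∈ im0 Ψ i0 := by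
    intro N
    induction N with
    | zero => intro d _ hDd g hgd; exact hD d (by simpa using hDd) g hgd
    | succ N ih =>
      intro d hd hDd g hgd
      have hlift : ∀ t : Fin 2, ∃ f : Fin (n + 2) → MvPolynomial (Fin 2) K,
          f i0 = 0 ∧ (∀ i, hg (f i) (d + 1 - a i)) ∧
          Ψ *ᵥ f = (X t : MvPolynomial (Fin 2) K) • g := by
        intro t
        have h1 : ∀ j, hg (((X t : MvPolynomial (Fin 2) K) • g) j) (d + 1 - b j) := by
          intro j
          have := hg_mul (hg_X (K := K) t) (hgd j)
          have e1 : 1 + (d - b j) = d + 1 - b j := by ring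
          rw [e1] at this
          exact this
        obtain ⟨f, hf0, hf⟩ := mem_im0.1 (ih (d + 1) (by omega) (by push_cast at hDd; omega) _ h1)
        refine ⟨fun i => hcmp (d + 1 - a i) (f i), ?_, fun i => hcmp_hg _ _,
          lift_homog hΨ f (d + 1) _ h1 hf⟩
        simp [hf0]
      obtain ⟨f1, h10, h1h, hf1⟩ := hlift 0
      obtain ⟨f2, h20, h2h, hf2⟩ := hlift 1
      obtain ⟨p, hp⟩ := ker_line Ψ i0 T hT hs
        ((X 1 : MvPolynomial (Fin 2) K) • f1 - (X 0 : MvPolynomial (Fin 2) K) • f2) (by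
          rw [Matrix.mulVec_sub, Matrix.mulVec_smul, Matrix.mulVec_smul, hf1, hf2, smul_comm,
            sub_self]) (by simp [h10, h20])
      obtain ⟨j, hj⟩ := Function.ne_iff.1 hs
      have hj' : Am Ψ i0 j ≠ 0 := hj
      have hpj := congrFun hp j
      simp only [Pi.smul_apply, Pi.sub_apply, smul_eq_mul] at hpj
      have hz : hcmp 0 p = 0 := by
        have h3 : hg (X 1 * f1 j - X 0 * f2 j) (1 + (d + 1 - a j)) := by
          have h4 := hg_mul (hg_X (K := K) (1 : Fin 2)) (h1h j)
          have h5 := hg_mul (hg_X (K := K) (0 : Fin 2)) (h2h j)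
          exact Submodule.sub_mem (weightedHomogeneousSubmodule K (fun _ : Fin 2 => (1 : ℤ)) _)
            h4 h5
        have h6 := hcmp_ne h3 (e := e - a j) (by omega)
        rw [hpj, mul_comm, hcmp_mul (he j), sub_self] at h6
        exact (mul_eq_zero.1 h6).resolve_left hj'
      obtain ⟨u, w, huw⟩ := (mem_XX (i := (0 : Fin 2)) (j := 1) (a := 1) (b := 1) (p := p)).2 (by
        intro x hx
        have h7 := congrArg (coeff x) hz
        rw [coeff_hcmp] at h7
        rw [mem_support_iff] at hx
        have h8 : (x.degree : ℤ) ≠ 0 := by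
          intro h9
          rw [if_pos h9] at h7
          exact hx (by simpa using h7)
        rw [Finsupp.degree_eq_sum, Fin.sum_univ_two] at h8
        omega)
      rw [pow_one, pow_one] at huw
      have h9 : (X 1 : MvPolynomial (Fin 2) K) • (f1 - w • Am Ψ i0) =
          (X 0 : MvPolynomial (Fin 2) K) • (f2 + u • Am Ψ i0) := by
        ext1 l
        have := congrFun hp l
        simp only [Pi.smul_apply, Pi.sub_apply, Pi.add_apply, smul_eq_mul] at this ⊢
        rw [huw] at this
        linear_combination this
      obtain ⟨f', hf'⟩ := vec_dvd (x := (X 0 : MvPolynomial (Fin 2) K)) (y := X 1)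
        (fun P Q h => by
          simpa using X_pow_dvd (i := (0 : Fin 2)) (j := 1) (by decide) 1 1 P Q (by simpa using h))
        h9
      refine mem_im0.2 ⟨f', ?_, ?_⟩
      · have := congrFun hf' i0
        simp only [Pi.smul_apply, Pi.sub_apply, smul_eq_mul, h10, Am_self, mul_zero, sub_zero]
          at this
        exact (mul_eq_zero.1 this.symm).resolve_left (X_ne_zero _)
      · have : (X 0 : MvPolynomial (Fin 2) K) • (Ψ *ᵥ f') = (X 0 : MvPolynomial (Fin 2) K) • g := by
          rw [← Matrix.mulVec_smul, ← hf', Matrix.mulVec_sub, Matrix.mulVec_smul, mulVec_Am,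
            smul_zero, sub_zero, hf1]
        exact smul_right_injective _ (X_ne_zero (R := K) (0 : Fin 2)) this
  exact mem_im0.1 (main (D - d).toNat d hd (by omega) g hgd)

end Line

/-! ### Part 5: assembling -/

section Final

open MvPolynomial Matrix

variable {K : Type*} [Field K]

lemma phiK_apply' {n : ℕ} (Φ : Matrix (Fin n) (Fin (n + 2)) (MvPolynomial (Fin 3) K)) (v) :
    phiK n Φ v = Φ *ᵥ v := rfl

lemma Nd_ne_bot {n : ℕ} {a : Fin (n + 2) → ℤ}
    {Φ : Matrix (Fin n) (Fin (n + 2)) (MvPolynomial (Fin 3) K)} {e : ℤ} :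
    Nd n a Φ e ≠ ⊥ ↔ ∃ v : Fin (n + 2) → MvPolynomial (Fin 3) K, v ≠ 0 ∧ Φ *ᵥ v = 0 ∧
      ∀ i, hg (v i) (e - a i) := by
  rw [Submodule.ne_bot_iff]
  constructor
  · rintro ⟨v, ⟨h1, h2⟩, h0⟩
    exact ⟨v, h0, h2, mem_degPiece.1 h1⟩
  · rintro ⟨v, h0, h2, h1⟩
    exact ⟨v, ⟨mem_degPiece.2 h1, h2⟩, h0⟩

lemma map_mulVec'_s3 {R S : Type*} [CommRing R] [CommRing S] (F : R →+* S) {r t : ℕ}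
    (Φ : Matrix (Fin r) (Fin t) R) (v : Fin t → R) :
    (Φ.map F) *ᵥ (fun i => F (v i)) = fun j => F ((Φ *ᵥ v) j) := by
  ext1 j
  simp [Matrix.mulVec, dotProduct, map_sum]

lemma map_mulVec_res (c : Fin 3 → K) {r t : ℕ}
    (Φ : Matrix (Fin r) (Fin t) (MvPolynomial (Fin 3) K))
    (v : Fin t → MvPolynomial (Fin 3) K) :
    (Φ.map (resL c).toRingHom) *ᵥ (fun i => resL c (v i)) = fun j => resL c ((Φ *ᵥ v) j) := by
  ext1 j
  simp [Matrix.mulVec, dotProduct, map_sum]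

lemma lift_res (c : Fin 3 → K) {r t : ℕ}
    (Φ : Matrix (Fin r) (Fin t) (MvPolynomial (Fin 3) K))
    (f : Fin t → MvPolynomial (Fin 2) K) (g : Fin r → MvPolynomial (Fin 3) K)
    (hf : (Φ.map (resL c).toRingHom) *ᵥ f = fun j => resL c (g j)) :
    ∀ j, resL c ((Φ *ᵥ (fun i => secL (f i))) j) = resL c (g j) := by
  intro j
  have h1 := congrFun (map_mulVec_res c Φ (fun i => secL (f i))) j
  have h2 : ∀ i, resL c (secL (f i)) = f i := fun i => resL_secL c (f i)
  simp only [h2] at h1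
  rw [← h1]
  exact congrFun hf j

lemma dvd_vec (c : Fin 3 → K) (hc : c 2 ≠ 0) {N : ℕ} (v w : Fin N → MvPolynomial (Fin 3) K)
    (h : ∀ i, resL c (v i) = resL c (w i)) :
    ∃ u : Fin N → MvPolynomial (Fin 3) K, v - w = linform c • u := by
  have : ∀ i, linform c ∣ v i - w i := by
    intro i
    have := sub_secL_resL c hc (v i - w i)
    simpa [h i] using this
  choose u hu using this
  exact ⟨u, funext hu⟩

lemma linform_ne_zero (c : Fin 3 → K) (hc : c 2 ≠ 0) : linform c ≠ 0 := by
  intro h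
  have := eval_linform c (Pi.single 2 1)
  rw [h] at this
  simp [Pi.single_apply] at this
  exact hc this.symm

lemma inj_aux {n : ℕ} {a : Fin (n + 2) → ℤ} {b : Fin n → ℤ}
    {Φ : Matrix (Fin n) (Fin (n + 2)) (MvPolynomial (Fin 3) K)}
    {c : Fin 3 → K} {d : ℤ}
    (H : ∀ g : Fin n → MvPolynomial (Fin 3) K, ∀ f : Fin (n + 2) → MvPolynomial (Fin 3) K,
      (∀ j, hg (g j) (d - 1 - b j)) → (∀ i, hg (f i) (d - a i)) → Φ *ᵥ f = linform c • g →
      ∃ f' : Fin (n + 2) → MvPolynomial (Fin 3) K,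
        (∀ i, hg (f' i) (d - 1 - a i)) ∧ Φ *ᵥ f' = g) :
    Function.Injective (mulLmap n a b Φ (linform c) (homog_linform c) d) := by
  rw [injective_iff_map_eq_zero]
  intro x hx
  obtain ⟨⟨g, hgd⟩, rfl⟩ := Submodule.Quotient.mk_surjective _ x
  rw [mulLmap, Submodule.mapQ_apply, Submodule.Quotient.mk_eq_zero] at hx
  obtain ⟨f, hf, hfg⟩ := hx
  rw [Submodule.Quotient.mk_eq_zero]
  obtain ⟨f', hf', hfg'⟩ := H g f (mem_degPiece.1 hgd) (mem_degPiece.1 hf) hfg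
  exact ⟨f', mem_degPiece.2 hf', hfg'⟩

lemma surj_aux {n : ℕ} {a : Fin (n + 2) → ℤ} {b : Fin n → ℤ}
    {Φ : Matrix (Fin n) (Fin (n + 2)) (MvPolynomial (Fin 3) K)}
    {c : Fin 3 → K} {d : ℤ}
    (H : ∀ g : Fin n → MvPolynomial (Fin 3) K, (∀ j, hg (g j) (d - b j)) →
      ∃ f : Fin (n + 2) → MvPolynomial (Fin 3) K, ∃ h : Fin n → MvPolynomial (Fin 3) K,
        (∀ i, hg (f i) (d - a i)) ∧ (∀ j, hg (h j) (d - 1 - b j)) ∧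
        linform c • h - g = Φ *ᵥ f) :
    Function.Surjective (mulLmap n a b Φ (linform c) (homog_linform c) d) := by
  intro x
  obtain ⟨⟨g, hgd⟩, rfl⟩ := Submodule.Quotient.mk_surjective _ x
  obtain ⟨f, h, hf, hh, e⟩ := H g (mem_degPiece.1 hgd)
  refine ⟨Submodule.Quotient.mk ⟨h, mem_degPiece.2 hh⟩, ?_⟩
  rw [mulLmap, Submodule.mapQ_apply, Submodule.Quotient.eq]
  exact ⟨f, mem_degPiece.2 hf, e.symm⟩

end Final


/-- If `a - b` is even (`a - b = 2m`) and `N_{m-1} ≠ 0` (the associated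
normalized rank-2 bundle with `c₁ = 0` is unstable), and `k = max{ j : N_{m-j} ≠ 0 }` is the
index of instability, then for a general linear form `L` the multiplication map
`×L : M_{d-1} → M_d` is injective for all `d ≤ m + k - 1` and surjective for all
`d ≥ m - k - 1`. -/
theorem statement3 {K : Type*} [Field K] [IsAlgClosed K] [CharZero K]
    (n : ℕ) (a : Fin (n + 2) → ℤ) (b : Fin n → ℤ)
    (Φ : Matrix (Fin n) (Fin (n + 2)) (MvPolynomial (Fin 3) K))
    (hΦ : ∀ j i, homog (Φ j i) (a i - b j))
    (hfin : FiniteColength n a b Φ)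
    (m : ℤ) (hm : (∑ i, a i) - (∑ j, b j) = 2 * m)
    (hunstable : Nd n a Φ (m - 1) ≠ ⊥)
    (k : ℤ) (hk₁ : Nd n a Φ (m - k) ≠ ⊥) (hk₂ : ∀ j : ℤ, Nd n a Φ (m - j) ≠ ⊥ → j ≤ k) :
    ∃ P : MvPolynomial (Fin 3) K, P ≠ 0 ∧ ∀ c : Fin 3 → K, eval c P ≠ 0 →
      (∀ d : ℤ, d ≤ m + k - 1 →
        Function.Injective (mulLmap n a b Φ (linform c) (homog_linform c) d)) ∧
      (∀ d : ℤ, m - k - 1 ≤ d →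
        Function.Surjective (mulLmap n a b Φ (linform c) (homog_linform c) d)) := by
  classical
  obtain ⟨s0, hs0, hΦs0, hs0d⟩ := Nd_ne_bot.1 hk₁
  obtain ⟨i0, hi0, hai0⟩ := exists_col hΦ hfin m hm (m - k) s0 hs0d hΦs0 hs0
  have hsd : ∀ j, hg (Am Φ i0 j) (2 * m - a i0 - a j) := by
    intro j
    have := hg_Am hΦ i0 j
    rwa [hm] at this
  have hle : a i0 - m ≤ k := by
    apply hk₂
    rw [Nd_ne_bot]
    refine ⟨Am Φ i0, hi0, mulVec_Am Φ i0, fun j => ?_⟩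
    have e : m - (a i0 - m) - a j = 2 * m - a i0 - a j := by ring
    rw [e]
    exact hsd j
  have ha : a i0 = m + k := by omega
  have hsd' : ∀ j, hg (Am Φ i0 j) (m - k - a j) := by
    intro j
    have := hsd j
    have e : 2 * m - a i0 - a j = m - k - a j := by omega
    rwa [e] at this
  have hprim := primitive_of_minimal hΦ (m - k) (Am Φ i0) hsd' (mulVec_Am Φ i0) hi0 (by
    intro e' v hv0 hv hvd
    have := hk₂ (m - e') (Nd_ne_bot.2 ⟨v, hv0, hv, by simpa using hvd⟩)
    omega)
  obtain ⟨P, hP0, hP⟩ := exists_general (Am Φ i0) _ hsd' hi0 hprim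
  refine ⟨P, hP0, fun c hcP => ?_⟩
  obtain ⟨hc, hpt⟩ := hP c hcP
  set Ψ := Φ.map (resL c).toRingHom with hΨdef
  have hΨ : ∀ j i, hg (Ψ j i) (a i - b j) := fun j i => hg_resL c (hΦ j i)
  have hAm : ∀ j, Am Ψ i0 j = resL c (Am Φ i0 j) := fun j => Am_map _ Φ i0 j
  have hzero : ∀ pt : Fin 2 → K, pt ≠ 0 → ∃ i, eval pt (Am Ψ i0 i) ≠ 0 := by
    intro pt hpt0
    have h1 : (![pt 0, pt 1, -(c 0 / c 2) * pt 0 + -(c 1 / c 2) * pt 1] : Fin 3 → K) ≠ 0 := by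
      intro h
      apply hpt0
      ext i
      fin_cases i
      · exact congrFun h 0
      · exact congrFun h 1
    obtain ⟨i, hi⟩ := hpt _ h1 (by
      rw [eval_linform, Fin.sum_univ_three]
      simp
      field_simp
      ring)
    refine ⟨i, ?_⟩
    rw [hAm, eval_resL]
    exact hi
  obtain ⟨T, hT⟩ := exists_pow_mem (Am Ψ i0) hzero
  have hΨ0 : Am Ψ i0 ≠ 0 := by
    intro h
    obtain ⟨i, hi⟩ := hzero (fun _ => 1) (fun h => one_ne_zero (congrFun h 0))
    rw [h] at hi
    simp at hi
  have hΨd : ∀ j, hg (Am Ψ i0 j) (m - k - a j) := by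
    intro j
    rw [hAm]
    exact hg_resL c (hsd' j)
  have hL0 := linform_ne_zero c hc
  refine ⟨fun d hd => inj_aux fun g f hgd hfd hfg => ?_, fun d hd => surj_aux fun g hgd => ?_⟩
  · have hfi : f i0 = 0 := hg_neg (hfd i0) (by omega)
    obtain ⟨p, hp⟩ := ker_line Ψ i0 T hT hΨ0 (fun i => resL c (f i)) (by
      have h1 := map_mulVec_res c Φ f
      rw [hfg] at h1
      refine h1.trans ?_
      ext1 j
      show resL c (linform c * g j) = 0
      rw [map_mul, resL_linform c hc, zero_mul]) (by simp [hfi])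
    obtain ⟨f', hf'⟩ := dvd_vec c hc f (secL p • Am Φ i0) (by
      intro i
      have := congrFun hp i
      simp only [Pi.smul_apply, smul_eq_mul] at this ⊢
      rw [map_mul, resL_secL, ← hAm]
      exact this)
    have h2 : linform c • (Φ.mulVec f') = linform c • g := by
      rw [← Matrix.mulVec_smul, ← hf', Matrix.mulVec_sub, Matrix.mulVec_smul, mulVec_Am,
        smul_zero, sub_zero, hfg]
    have h3 : Φ.mulVec f' = g := smul_right_injective _ hL0 h2
    exact ⟨_, fun i => hcmp_hg _ _, lift_homog hΦ f' (d - 1) g hgd h3⟩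
  · obtain ⟨f, -, hf⟩ := line_surj Ψ hΨ i0 T hT hΨ0 (m - k) hΨd d hd (fun j => resL c (g j))
      (fun j => hg_resL c (hgd j))
    have h7 := lift_res c Φ f g hf
    obtain ⟨h, hh⟩ := dvd_vec c hc (Φ.mulVec (fun i => secL (f i))) g h7
    refine ⟨fun i => hcmp (d - a i) (-secL (f i)), fun j => hcmp (d - 1 - b j) (-h j),
      fun i => hcmp_hg _ _, fun j => hcmp_hg _ _, ?_⟩
    ext1 j
    have h4 := congrFun hh j
    simp only [Pi.sub_apply, Pi.smul_apply, smul_eq_mul] at h4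
    have h5 := congrArg (hcmp (d - b j)) h4
    have e1 : d - b j - 1 = d - 1 - b j := by ring
    rw [map_sub, hcmp_mulVec hΦ, hcmp_same (hgd j), hcmp_mul (homog_linform c), e1] at h5
    have h6 : (fun i => hcmp (d - a i) (-secL (f i))) =
        -(fun i => hcmp (d - a i) (secL (f i))) := by
      ext1 i
      simp
    rw [h6, Matrix.mulVec_neg]
    simp only [Pi.sub_apply, Pi.smul_apply, smul_eq_mul, Pi.neg_apply, map_neg]
    linear_combination h5
end
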